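/- arXiv:1307.8139 — 2 statements merged into one kernel-verified Lean document; each statement's English description precedes it below -/
import Mathlib

section
/- Let d > 1 and C > 0 be real constants. There exists a constant K > 0 (depending only on d and C) such that for every set system (X, S) on a finite ground set X with |X| = n ≥ 2 whose primal shatter function satisfies π_S(m) ≤ C·m^d for all 1 ≤ m ≤ n, there exists a coloring χ : X → {-1, +1} such that for every S ∈ S, |∑_{x∈S} χ(x)| ≤ K · n^{1/2 - 1/(2d)}. -/
section Helpers
open Finset

/-- number of edges of the unit distance graph -/
def unitEdges {α : Type} [DecidableEq α] (U : Finset α) (Q : Finset (Finset α)) : ℕ :=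
  ∑ a ∈ U, (Q.memberSubfamily a ∩ Q.nonMemberSubfamily a).card

lemma supermod {β : Type} [DecidableEq β] (P Q R S : Finset β) :
    (P ∩ Q).card + (R ∩ S).card ≤ ((P ∪ R) ∩ (Q ∪ S)).card + ((P ∩ R) ∩ (Q ∩ S)).card := by
  have h1 : (P ∩ Q) ∪ (R ∩ S) ⊆ (P ∪ R) ∩ (Q ∪ S) := by
    intro x; simp only [mem_union, mem_inter]; tauto
  have h2 : (P ∩ Q) ∩ (R ∩ S) ⊆ (P ∩ R) ∩ (Q ∩ S) := by
    intro x; simp only [mem_inter]; tauto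
  have := card_union_add_card_inter (P ∩ Q) (R ∩ S)
  have := card_le_card h1
  have := card_le_card h2
  omega

lemma dir_bound {α : Type} [DecidableEq α] (x a : α) (hxa : a ≠ x) (Q : Finset (Finset α)) :
    (Q.memberSubfamily a ∩ Q.nonMemberSubfamily a).card ≤
     ((Q.memberSubfamily x).memberSubfamily a ∩ (Q.memberSubfamily x).nonMemberSubfamily a).card
     + ((Q.nonMemberSubfamily x).memberSubfamily a ∩
        (Q.nonMemberSubfamily x).nonMemberSubfamily a).card := by
  rw [← card_memberSubfamily_add_card_nonMemberSubfamily x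
    (Q.memberSubfamily a ∩ Q.nonMemberSubfamily a)]
  gcongr ?_ + ?_
  · apply card_le_card
    intro T
    simp only [mem_memberSubfamily, mem_inter, mem_nonMemberSubfamily, mem_insert]
    rintro ⟨⟨⟨h1, h2⟩, h3, h4⟩, h5⟩
    rw [Finset.insert_comm]
    push Not at h2
    grind
  · apply card_le_card
    intro T
    simp only [mem_memberSubfamily, mem_inter, mem_nonMemberSubfamily, mem_insert]
    grind

lemma unitEdges_le {α : Type} [DecidableEq α] (U : Finset α) :
    ∀ (Q : Finset (Finset α)) (D : ℕ), (∀ T ∈ Q, T ⊆ U) →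
      (∀ s, Q.Shatters s → s.card < D) → unitEdges U Q ≤ D * Q.card := by
  induction U using Finset.induction_on with
  | empty => intro Q D _ _; simp [unitEdges]
  | insert x U hx ih =>
    intro Q D hQ hD
    rcases Q.eq_empty_or_nonempty with rfl | hne
    · simp [unitEdges, memberSubfamily, nonMemberSubfamily]
    have hD0 : 0 < D := by
      have := hD ∅ (shatters_empty.mpr hne)
      simpa using this
    obtain ⟨E, rfl⟩ : ∃ E, D = E + 1 := ⟨D - 1, by omega⟩
    set Q1 := Q.memberSubfamily x with hQ1
    set Q0 := Q.nonMemberSubfamily x with hQ0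
    have hsub1 : ∀ T ∈ Q1, T ⊆ U := by
      intro T hT y hy
      simp only [hQ1, mem_memberSubfamily] at hT
      have := hQ _ hT.1 (mem_insert_of_mem hy)
      grind
    have hsub0 : ∀ T ∈ Q0, T ⊆ U := by
      intro T hT y hy
      simp only [hQ0, mem_nonMemberSubfamily] at hT
      have := hQ _ hT.1 hy
      grind
    have i1 := ih (Q1 ∪ Q0) (E + 1) (by grind) (by
      intro s hs
      apply hD
      obtain ⟨u, hu, hsu⟩ := hs (subset_refl s)
      have hsU : s ⊆ U := by
        have : u ⊆ U := by grind
        exact (Finset.inter_eq_left.mp hsu).trans this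
      intro t ht
      obtain ⟨v, hv, hsv⟩ := hs ht
      rcases mem_union.mp hv with hv | hv
      · simp only [hQ1, mem_memberSubfamily] at hv
        refine ⟨insert x v, hv.1, ?_⟩
        rw [← hsv, Finset.inter_insert_of_notMem]
        exact fun h => hx (hsU h)
      · simp only [hQ0, mem_nonMemberSubfamily] at hv
        exact ⟨v, hv.1, hsv⟩)
    have i2 := ih (Q1 ∩ Q0) E (by grind) (by
      intro s hs
      obtain ⟨u, hu, hsu⟩ := hs (subset_refl s)
      have hsU : s ⊆ U := by
        have : u ⊆ U := by grind
        exact (Finset.inter_eq_left.mp hsu).trans this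
      have hxs : x ∉ s := fun h => hx (hsU h)
      have := hD (insert x s) (by
        intro t ht
        obtain ⟨v, hv, hsv⟩ := hs (t := t.erase x) (by grind)
        simp only [hQ1, hQ0, mem_inter, mem_memberSubfamily, mem_nonMemberSubfamily] at hv
        by_cases hxt : x ∈ t
        · refine ⟨insert x v, hv.1.1, ?_⟩
          rw [← Finset.insert_inter_distrib, hsv, insert_erase hxt]
        · refine ⟨v, hv.2.1, ?_⟩
          rw [Finset.insert_inter_of_notMem hv.2.2, hsv, erase_eq_of_notMem hxt])
      rw [card_insert_of_notMem hxs] at this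
      omega)
    have hcard := card_memberSubfamily_add_card_nonMemberSubfamily x Q
    have hc2 := card_union_add_card_inter Q1 Q0
    have hkey : unitEdges (insert x U) Q ≤
        (Q1 ∩ Q0).card + (unitEdges U (Q1 ∪ Q0) + unitEdges U (Q1 ∩ Q0)) := by
      unfold unitEdges
      rw [sum_insert hx, ← sum_add_distrib]
      gcongr with a ha
      have hax : a ≠ x := by rintro rfl; exact hx ha
      refine (dir_bound x a hax Q).trans ?_
      rw [memberSubfamily_union, memberSubfamily_inter, nonMemberSubfamily_union,
        nonMemberSubfamily_inter]
      exact supermod _ _ _ _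
    rw [← hcard, ← hQ1, ← hQ0, ← hc2]
    nlinarith


/-- splitting number of the traces on `A` by `a` -/
def splitNum {α : Type} [DecidableEq α] (P : Finset (Finset α)) (A : Finset α) (a : α) : ℕ :=
  ∑ T ∈ A.powerset, min (P.filter (fun S => S ∩ A = T ∧ a ∉ S)).card
    (P.filter (fun S => S ∩ A = T ∧ a ∈ S)).card

lemma min_layer (x y N : ℕ) (hx : x ≤ N) :
    min x y = ((range N).filter (fun t => t < x ∧ t < y)).card := by
  have : (range N).filter (fun t => t < x ∧ t < y) = range (min x y) := by
    ext t; simp only [mem_filter, mem_range]; omega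
  rw [this, card_range]

lemma sum_splitNum_le {α : Type} [DecidableEq α] (P : Finset (Finset α)) (A : Finset α) (D : ℕ)
    (hD : ∀ s, P.Shatters s → s.card < D) :
    ∑ a ∈ A, splitNum P (A.erase a) a ≤ D * P.card := by
  set w : Finset α → ℕ := fun T => (P.filter (fun S => S ∩ A = T)).card with hw
  set Q : ℕ → Finset (Finset α) := fun t => A.powerset.filter (fun T => t < w T) with hQ
  have hwN : ∀ T, w T ≤ P.card := fun T => card_filter_le _ _
  have h1 : ∀ t, unitEdges A (Q t) ≤ D * (Q t).card := by
    intro t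
    apply unitEdges_le
    · intro T hT; simp only [hQ, mem_filter, mem_powerset] at hT; exact hT.1
    · intro s hs
      apply hD
      obtain ⟨u, hu, hsu⟩ := hs (subset_refl s)
      have hsA : s ⊆ A := by
        have : u ⊆ A := by simp only [hQ, mem_filter, mem_powerset] at hu; exact hu.1
        exact (Finset.inter_eq_left.mp hsu).trans this
      intro r hr
      obtain ⟨v, hv, hsv⟩ := hs hr
      simp only [hQ, mem_filter, mem_powerset] at hv
      obtain ⟨S, hS⟩ := card_pos.mp (lt_of_le_of_lt (Nat.zero_le t) hv.2)
      rw [mem_filter] at hS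
      refine ⟨S, hS.1, ?_⟩
      rw [← hsv, ← hS.2]
      ext y
      simp only [mem_inter]
      have := @hsA y
      tauto
  have h2 : ∑ t ∈ range P.card, (Q t).card = P.card := by
    have : ∀ t, (Q t).card = ∑ T ∈ A.powerset, if t < w T then 1 else 0 := by
      intro t; rw [hQ, card_filter]
    simp_rw [this]
    rw [sum_comm]
    have h3 : ∀ T, ∑ t ∈ range P.card, (if t < w T then 1 else 0) = w T := by
      intro T
      rw [← card_filter]
      have : (range P.card).filter (fun t => t < w T) = range (w T) := by
        ext t; simp only [mem_filter, mem_range]; have := hwN T; omega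
      rw [this, card_range]
    simp_rw [h3]
    rw [hw, ← card_eq_sum_card_fiberwise]
    intro S _
    simp
  have h4 : ∑ a ∈ A, splitNum P (A.erase a) a = ∑ t ∈ range P.card, unitEdges A (Q t) := by
    unfold unitEdges
    rw [sum_comm]
    apply sum_congr rfl
    intro a ha
    have h5 : ∀ t, (Finset.memberSubfamily a (Q t) ∩ Finset.nonMemberSubfamily a (Q t)) =
        (A.erase a).powerset.filter (fun T => t < w T ∧ t < w (insert a T)) := by
      intro t
      ext T
      simp only [hQ, mem_inter, mem_memberSubfamily, mem_nonMemberSubfamily, mem_filter,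
        mem_powerset, insert_subset_iff, subset_erase]
      tauto
    simp_rw [h5, card_filter]
    rw [sum_comm]
    unfold splitNum
    apply sum_congr rfl
    intro T hT
    rw [← card_filter, ← min_layer _ _ _ (hwN T)]
    simp only [mem_powerset, subset_erase] at hT
    congr 1
    · rw [hw]
      congr 1
      ext S
      simp only [mem_filter, and_congr_right_iff]
      intro _
      constructor
      · rintro ⟨rfl, h⟩
        ext y; simp only [mem_inter, mem_erase]; grind
      · rintro rfl
        refine ⟨?_, ?_⟩
        · ext y; simp only [mem_inter, mem_erase] at *; grind
        · intro h; exact hT.2 (mem_inter.mpr ⟨h, ha⟩)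
    · rw [hw]
      congr 1
      ext S
      simp only [mem_filter, and_congr_right_iff]
      intro _
      constructor
      · rintro ⟨rfl, h⟩
        ext y; simp only [mem_inter, mem_erase, mem_insert]; grind
      · intro h
        have haS : a ∈ S := by
          have : a ∈ S ∩ A := by rw [h]; exact mem_insert_self _ _
          exact (mem_inter.mp this).1
        refine ⟨?_, haS⟩
        rw [inter_erase, h, erase_insert hT.2]
  rw [h4]
  calc _ ≤ ∑ t ∈ range P.card, D * (Q t).card := sum_le_sum (fun t _ => h1 t)
    _ = D * P.card := by rw [← mul_sum, h2]

lemma class_split {α : Type} [DecidableEq α] (X A : Finset α) (c : Finset (Finset α)) (δ : ℝ) (hδ : 0 ≤ δ)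
    (hX : ∀ S ∈ c, S ⊆ X) (T : Finset α) (hT : ∀ S ∈ c, S ∩ A = T)
    (hsep : ∀ S ∈ c, ∀ S' ∈ c, S ≠ S' → δ ≤ ((S \ S').card + (S' \ S).card : ℝ)) :
    ((c.card : ℝ) - 1) * δ / 2 ≤
      ∑ a ∈ X \ A, ((min (c.filter (fun S => a ∉ S)).card (c.filter (fun S => a ∈ S)).card : ℕ) : ℝ)
    := by
  rcases c.eq_empty_or_nonempty with rfl | hne
  · simp only [filter_empty, card_empty, min_self, Nat.cast_zero, sum_const_zero, zero_sub]
    linarith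
  have hb : (0:ℝ) < c.card := by exact_mod_cast card_pos.mpr hne
  have h1 : ∀ a, ((c.filter (fun S => a ∉ S)).card : ℝ) * (c.filter (fun S => a ∈ S)).card ≤
      (c.card : ℝ) * ((min (c.filter (fun S => a ∉ S)).card (c.filter (fun S => a ∈ S)).card : ℕ) : ℝ) := by
    intro a
    norm_cast
    rw [← min_mul_max, mul_comm]
    gcongr
    exact max_le (card_filter_le _ _) (card_filter_le _ _)
  have h2 : ∑ a ∈ X \ A, ((c.filter (fun S => a ∉ S)).card : ℝ) * (c.filter (fun S => a ∈ S)).card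
      = ∑ S ∈ c, ∑ S' ∈ c, ((S' \ S).card : ℝ) := by
    have h3 : ∀ a, ((c.filter (fun S => a ∉ S)).card : ℝ) * (c.filter (fun S => a ∈ S)).card =
        ∑ S ∈ c, ∑ S' ∈ c, if a ∈ S' \ S then (1:ℝ) else 0 := by
      intro a
      rw [card_filter, card_filter]
      push_cast
      rw [sum_mul_sum]
      apply sum_congr rfl; intro S _
      apply sum_congr rfl; intro S' _
      by_cases h : a ∈ S <;> by_cases h' : a ∈ S' <;> simp [h, h']
    simp_rw [h3]
    rw [sum_comm]
    apply sum_congr rfl; intro S hS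
    rw [sum_comm]
    apply sum_congr rfl; intro S' hS'
    rw [← Finset.sum_filter, sum_const, nsmul_eq_mul, mul_one]
    congr 2
    ext y
    simp only [mem_filter, mem_sdiff]
    have e : S ∩ A = S' ∩ A := by rw [hT S hS, hT S' hS']
    have := hX S' hS'
    constructor
    · tauto
    · rintro ⟨h, h'⟩
      refine ⟨⟨this h, fun hA => ?_⟩, h, h'⟩
      have : y ∈ S ∩ A := by rw [e]; exact mem_inter.mpr ⟨h, hA⟩
      exact h' (mem_inter.mp this).1
  have h4 : (c.card : ℝ) * ((c.card - 1) * δ) ≤ ∑ S ∈ c, ∑ S' ∈ c, (((S \ S').card : ℝ) + (S' \ S).card) := by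
    rw [← nsmul_eq_mul]
    apply card_nsmul_le_sum
    intro S hS
    rw [← add_sum_erase _ _ hS]
    simp only [Finset.sdiff_self, card_empty, Nat.cast_zero, add_zero, zero_add]
    have : ((c.card : ℝ) - 1) = ((c.erase S).card : ℝ) := by
      rw [card_erase_of_mem hS, Nat.cast_sub (card_pos.mpr hne)]; simp
    rw [this, ← nsmul_eq_mul]
    apply card_nsmul_le_sum
    intro S' hS'
    rw [mem_erase] at hS'
    exact hsep S hS S' hS'.2 hS'.1.symm
  have h5 : ∑ S ∈ c, ∑ S' ∈ c, (((S \ S').card : ℝ) + (S' \ S).card) =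
      2 * ∑ S ∈ c, ∑ S' ∈ c, ((S' \ S).card : ℝ) := by
    simp_rw [sum_add_distrib]
    rw [sum_comm, two_mul]
  have h6 := sum_le_sum (s := X \ A) (fun a _ => h1 a)
  rw [h2, ← mul_sum] at h6
  rw [h5] at h4
  have : (c.card : ℝ) * (((c.card : ℝ) - 1) * δ / 2) ≤ (c.card : ℝ) *
    ∑ a ∈ X \ A, ((min (c.filter (fun S => a ∉ S)).card (c.filter (fun S => a ∈ S)).card : ℕ) : ℝ) := by
    linarith
  exact le_of_mul_le_mul_left this hb

lemma sum_splitNum_ge {α : Type} [DecidableEq α] (X A : Finset α) (P : Finset (Finset α)) (δ : ℝ) (hδ : 0 ≤ δ)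
    (hX : ∀ S ∈ P, S ⊆ X)
    (hsep : ∀ S ∈ P, ∀ S' ∈ P, S ≠ S' → δ ≤ ((S \ S').card + (S' \ S).card : ℝ)) :
    ((P.card : ℝ) - (P.image (· ∩ A)).card) * δ / 2 ≤ ∑ a ∈ X \ A, (splitNum P A a : ℝ) := by
  have h1 : ∀ T, (((P.filter (fun S => S ∩ A = T)).card : ℝ) - 1) * δ / 2 ≤
      ∑ a ∈ X \ A, ((min (P.filter (fun S => S ∩ A = T ∧ a ∉ S)).card
        (P.filter (fun S => S ∩ A = T ∧ a ∈ S)).card : ℕ) : ℝ) := by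
    intro T
    have := class_split X A (P.filter (fun S => S ∩ A = T)) δ hδ
      (fun S hS => hX S (mem_filter.mp hS).1) T (fun S hS => (mem_filter.mp hS).2)
      (fun S hS S' hS' => hsep S (mem_filter.mp hS).1 S' (mem_filter.mp hS').1)
    simpa only [filter_filter] using this
  have h2 : (P.card : ℝ) = ∑ T ∈ P.image (· ∩ A), ((P.filter (fun S => S ∩ A = T)).card : ℝ) := by
    exact_mod_cast card_eq_sum_card_image (· ∩ A) P
  have h3 : ((P.card : ℝ) - (P.image (· ∩ A)).card) * δ / 2 =
     ∑ T ∈ P.image (· ∩ A), (((P.filter (fun S => S ∩ A = T)).card : ℝ) - 1) * δ / 2 := by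
    rw [← sum_div, ← sum_mul, sum_sub_distrib, ← h2]; simp
  rw [h3]
  calc _ ≤ ∑ T ∈ P.image (· ∩ A), ∑ a ∈ X \ A, ((min (P.filter (fun S => S ∩ A = T ∧ a ∉ S)).card
        (P.filter (fun S => S ∩ A = T ∧ a ∈ S)).card : ℕ) : ℝ) := sum_le_sum (fun T _ => h1 T)
    _ ≤ ∑ T ∈ A.powerset, ∑ a ∈ X \ A, ((min (P.filter (fun S => S ∩ A = T ∧ a ∉ S)).card
        (P.filter (fun S => S ∩ A = T ∧ a ∈ S)).card : ℕ) : ℝ) := by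
        apply sum_le_sum_of_subset_of_nonneg
        · intro T hT
          obtain ⟨S, _, rfl⟩ := mem_image.mp hT
          simp
        · intro T _ _
          exact sum_nonneg (fun _ _ => Nat.cast_nonneg _)
    _ = _ := by
        rw [sum_comm]
        apply sum_congr rfl
        intro a _
        rw [splitNum, Nat.cast_sum]

lemma sum_erase_swap {α : Type} [DecidableEq α] (X : Finset α) (m : ℕ) (g : Finset α → α → ℝ) :
    ∑ A ∈ powersetCard (m + 1) X, ∑ a ∈ A, g (A.erase a) a =
      ∑ B ∈ powersetCard m X, ∑ a ∈ X \ B, g B a := by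
  rw [sum_sigma', sum_sigma']
  refine sum_bij' (fun p _ => ⟨p.1.erase p.2, p.2⟩) (fun p _ => ⟨insert p.2 p.1, p.2⟩) ?_ ?_ ?_ ?_ ?_
  · rintro ⟨A, a⟩ h
    simp only [mem_sigma, mem_powersetCard, mem_sdiff] at *
    refine ⟨⟨(erase_subset _ _).trans h.1.1, ?_⟩, h.1.1 h.2, notMem_erase _ _⟩
    rw [card_erase_of_mem h.2]; omega
  · rintro ⟨A, a⟩ h
    simp only [mem_sigma, mem_powersetCard, mem_sdiff] at *
    refine ⟨⟨insert_subset h.2.1 h.1.1, ?_⟩, mem_insert_self _ _⟩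
    rw [card_insert_of_notMem h.2.2]; omega
  · rintro ⟨A, a⟩ h
    simp only [mem_sigma, mem_powersetCard, mem_sdiff] at *
    rw [insert_erase h.2]
  · rintro ⟨A, a⟩ h
    simp only [mem_sigma, mem_powersetCard, mem_sdiff] at *
    rw [erase_insert h.2.2]
  · rintro ⟨A, a⟩ h
    rfl

/-- Haussler's packing lemma -/
lemma packing {α : Type} [DecidableEq α] (d C : ℝ) (X : Finset α) (P : Finset (Finset α))
    (δ : ℝ) (hδ : 0 < δ) (hd : 0 < d) (hC : 0 < C)
    (hX : ∀ S ∈ P, S ⊆ X) (D m : ℕ) (hm1 : 1 ≤ m) (hm : 4 * D * X.card ≤ m * δ)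
    (hD : ∀ s, P.Shatters s → s.card < D)
    (hsep : ∀ S ∈ P, ∀ S' ∈ P, S ≠ S' → δ ≤ ((S \ S').card + (S' \ S).card : ℝ))
    (hsh : ∀ Y ⊆ X, 1 ≤ Y.card → ((P.image (· ∩ Y)).card : ℝ) ≤ C * (Y.card : ℝ) ^ d)
    (hX1 : 1 ≤ X.card) :
    (P.card : ℝ) ≤ 2 * C * (m : ℝ) ^ d := by
  have hpos : 0 ≤ C * (m:ℝ)^d := by positivity
  rcases le_or_gt m X.card with hmn | hmn
  · have a1 : ∑ A ∈ powersetCard (m + 1) X, ∑ a ∈ A, (splitNum P (A.erase a) a : ℝ) ≤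
        (X.card.choose (m+1) : ℝ) * (D * P.card) := by
      rw [← card_powersetCard, ← nsmul_eq_mul]
      apply sum_le_card_nsmul
      intro A _
      exact_mod_cast sum_splitNum_le P A D hD
    rw [sum_erase_swap X m (fun B a => (splitNum P B a : ℝ))] at a1
    have a2 : (X.card.choose m : ℝ) * (((P.card : ℝ) - C * (m:ℝ)^d) * δ / 2) ≤
        ∑ B ∈ powersetCard m X, ∑ a ∈ X \ B, (splitNum P B a : ℝ) := by
      rw [← card_powersetCard, ← nsmul_eq_mul]
      apply card_nsmul_le_sum
      intro B hB
      rw [mem_powersetCard] at hB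
      refine le_trans ?_ (sum_splitNum_ge X B P δ hδ.le hX hsep)
      have := hsh B hB.1 (by omega)
      rw [hB.2] at this
      gcongr
    have hch : (0:ℝ) < X.card.choose m := by exact_mod_cast Nat.choose_pos hmn
    have hch2 : (X.card.choose (m+1) : ℝ) * m ≤ X.card.choose m * X.card := by
      have := Nat.choose_succ_right_eq X.card m
      have h2 : X.card.choose (m+1) * m ≤ X.card.choose m * X.card := by
        calc _ ≤ X.card.choose (m+1) * (m+1) := by gcongr; omega
          _ = _ := this
          _ ≤ _ := by gcongr; omega
      exact_mod_cast h2
    have hm0 : (0:ℝ) < m := by exact_mod_cast hm1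
    have a3 := a2.trans a1
    have a4 : (X.card.choose m : ℝ) * ((((P.card : ℝ) - C * (m:ℝ)^d) * δ / 2) * m) ≤
        (X.card.choose m : ℝ) * (X.card * (D * P.card)) := by
      calc _ = ((X.card.choose m : ℝ) * ((((P.card : ℝ) - C * (m:ℝ)^d) * δ / 2))) * m := by ring
        _ ≤ (X.card.choose (m+1) : ℝ) * (D * P.card) * m := by gcongr
        _ = ((X.card.choose (m+1) : ℝ) * m) * (D * P.card) := by ring
        _ ≤ (X.card.choose m * X.card) * (D * P.card) := by gcongr
        _ = _ := by ring
    have a5 := le_of_mul_le_mul_left a4 hch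
    have a6 : 4 * ((X.card:ℝ) * (D * P.card)) ≤ m * δ * P.card := by
      calc _ = (4 * D * X.card) * (P.card:ℝ) := by ring
        _ ≤ _ := by gcongr
    have a7 : (m * δ) * (P.card : ℝ) ≤ (m * δ) * (2 * C * (m : ℝ) ^ d) := by nlinarith
    exact le_of_mul_le_mul_left a7 (by positivity)
  · have := hsh X (subset_refl _) hX1
    have e : P.image (· ∩ X) = P := by
      have : P.image (· ∩ X) = P.image id := by
        apply image_congr
        intro S hS
        exact inter_eq_left.mpr (hX S hS)
      rw [this, image_id]
    rw [e] at this
    have h2 : (X.card : ℝ) ^ d ≤ (m:ℝ)^d := by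
      apply Real.rpow_le_rpow (by positivity) _ hd.le
      exact_mod_cast hmn.le
    nlinarith


lemma exists_maxsep {α : Type} [DecidableEq α] (P : Finset (Finset α)) (δ : ℝ) (hδ : 0 < δ) :
    ∃ F ⊆ P, (∀ S ∈ F, ∀ S' ∈ F, S ≠ S' → δ ≤ ((S \ S').card + (S' \ S).card : ℝ)) ∧
      ∀ S ∈ P, ∃ T ∈ F, ((S \ T).card + (T \ S).card : ℝ) < δ := by
  classical
  obtain ⟨F, hF, hmax⟩ := exists_max_image (P.powerset.filter (fun F => ∀ S ∈ F, ∀ S' ∈ F, S ≠ S' →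
    δ ≤ ((S \ S').card + (S' \ S).card : ℝ))) card ⟨∅, by simp⟩
  rw [mem_filter, mem_powerset] at hF
  refine ⟨F, hF.1, hF.2, ?_⟩
  intro S hS
  by_contra! hcon
  have hSF : S ∉ F := by
    intro h
    have := hcon S h
    simp at this
    linarith
  have := hmax (insert S F) (by
    rw [mem_filter, mem_powerset]
    refine ⟨insert_subset hS hF.1, ?_⟩
    intro U hU U' hU' hne
    rcases mem_insert.mp hU with rfl | hUF
    · rcases mem_insert.mp hU' with rfl | hU'
      · exact absurd rfl hne
      · exact hcon U' hU'
    · rcases mem_insert.mp hU' with rfl | hU'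
      · rw [add_comm]; exact hcon U hUF
      · exact hF.2 U hUF U' hU' hne)
  rw [card_insert_of_notMem hSF] at this
  omega

lemma exists_dim (d C : ℝ) (hC : 0 < C) : ∃ D : ℕ, 1 ≤ D ∧ ∀ k : ℕ, D ≤ k →
    C * (k : ℝ) ^ d < 2 ^ k := by
  have h := tendsto_pow_const_div_const_pow_of_one_lt ⌈d⌉₊ (one_lt_two : (1:ℝ) < 2)
  have h2 := h.eventually (gt_mem_nhds (show (0:ℝ) < 1 / C by positivity))
  obtain ⟨N, hN⟩ := Filter.eventually_atTop.mp h2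
  refine ⟨max N 1, le_max_right _ _, fun k hk => ?_⟩
  have h3 := hN k ((le_max_left _ _).trans hk)
  have hk1 : (1:ℝ) ≤ k := by exact_mod_cast (le_max_right _ _).trans hk
  rw [div_lt_div_iff₀ (by positivity) hC] at h3
  have h4 : (k:ℝ) ^ d ≤ (k:ℝ) ^ ⌈d⌉₊ := by
    rw [← Real.rpow_natCast]
    exact Real.rpow_le_rpow_of_exponent_le hk1 (Nat.le_ceil d)
  nlinarith

lemma exists_levels (d C : ℝ) (hd : 1 < d) (hC : 0 < C) : ∃ A : ℝ, 0 < A ∧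
    ∀ (α : Type) [DecidableEq α] (X : Finset α) (P : Finset (Finset α)), 1 ≤ X.card →
      (∀ S ∈ P, S ⊆ X) →
      (∀ Y ⊆ X, 1 ≤ Y.card → ((P.image (· ∩ Y)).card : ℝ) ≤ C * (Y.card : ℝ) ^ d) →
      ∀ i : ℕ, ∃ F ⊆ P, (F.card : ℝ) ≤ A * ((2:ℝ) ^ i) ^ d ∧
        ∀ S ∈ P, ∃ T ∈ F, ((S \ T).card + (T \ S).card : ℝ) < X.card / 2 ^ i := by
  obtain ⟨D, hD1, hD⟩ := exists_dim d C hC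
  have hD0 : (0:ℝ) < D := by exact_mod_cast hD1
  refine ⟨2 * C * (4 * D) ^ d, by positivity, ?_⟩
  intro α _ X P hX1 hX hsh i
  have hn : (0:ℝ) < X.card := by exact_mod_cast hX1
  have hδ : (0:ℝ) < X.card / 2 ^ i := by positivity
  obtain ⟨F, hFP, hsep, hcov⟩ := exists_maxsep P (X.card / 2 ^ i) hδ
  refine ⟨F, hFP, ?_, hcov⟩
  have hshF : ∀ Y ⊆ X, 1 ≤ Y.card → ((F.image (· ∩ Y)).card : ℝ) ≤ C * (Y.card : ℝ) ^ d := by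
    intro Y hY hY1
    refine le_trans ?_ (hsh Y hY hY1)
    exact_mod_cast card_le_card (image_subset_image hFP)
  have := packing d C X F (X.card / 2 ^ i) hδ (by linarith) hC (fun S hS => hX S (hFP hS)) D
    (4 * D * 2 ^ i) (by have : 0 < 2 ^ i := by positivity
                        nlinarith) (by
      push_cast
      apply le_of_eq
      field_simp) (by
      intro s hs
      by_contra! hcon
      obtain ⟨u, hu, hsu⟩ := hs (subset_refl s)
      have hsX : s ⊆ X := (Finset.inter_eq_left.mp hsu).trans (hX u (hFP hu))
      have h1 := hshF s hsX (hD1.trans hcon)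
      have h2 := hD s.card hcon
      rw [shatters_iff] at hs
      have : F.image (· ∩ s) = s.powerset := by
        rw [← hs]; congr 1; ext1 t; rw [inter_comm]
      rw [this, card_powerset] at h1
      push_cast at h1
      linarith) hsep hshF hX1
  refine this.trans (le_of_eq ?_)
  push_cast
  rw [Real.mul_rpow (by positivity) (by positivity)]
  ring


/-- the colouring attached to a subset -/
noncomputable def sgn {α : Type} [DecidableEq α] (A : Finset α) (x : α) : ℝ :=
  if x ∈ A then 1 else -1

lemma sum_powerset_prod {α : Type} [DecidableEq α] (X : Finset α) (f g : α → ℝ) :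
    ∑ A ∈ X.powerset, ∏ x ∈ X, (if x ∈ A then f x else g x) = ∏ x ∈ X, (f x + g x) := by
  rw [prod_add]
  apply sum_congr rfl
  intro A hA
  rw [mem_powerset] at hA
  rw [← prod_sdiff hA, mul_comm]
  congr 1
  · apply prod_congr rfl; intro x hx; simp [hx]
  · apply prod_congr rfl; intro x hx; simp [(mem_sdiff.mp hx).2]

lemma mgf_bound {α : Type} [DecidableEq α] (X : Finset α) (v : α → ℝ) (s : ℝ) :
    ∑ A ∈ X.powerset, Real.exp (s * ∑ x ∈ X, v x * sgn A x) ≤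
      2 ^ X.card * Real.exp (s ^ 2 * (∑ x ∈ X, v x ^ 2) / 2) := by
  have h1 : ∀ A, Real.exp (s * ∑ x ∈ X, v x * sgn A x) =
      ∏ x ∈ X, (if x ∈ A then Real.exp (s * v x) else Real.exp (-(s * v x))) := by
    intro A
    rw [mul_sum, Real.exp_sum]
    apply prod_congr rfl
    intro x _
    unfold sgn
    split_ifs
    · congr 1; ring
    · congr 1; ring
  simp_rw [h1]
  rw [sum_powerset_prod]
  calc _ ≤ ∏ x ∈ X, (2 * Real.exp ((s * v x) ^ 2 / 2)) := by
        apply prod_le_prod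
        · intros; positivity
        · intro x _
          have := Real.cosh_le_exp_half_sq (s * v x)
          rw [Real.cosh_eq] at this
          linarith
    _ = _ := by
        rw [prod_mul_distrib, prod_const, ← Real.exp_sum]
        congr 2
        rw [mul_sum, sum_div]
        apply sum_congr rfl; intros; ring

lemma mgf_abs {α : Type} [DecidableEq α] (X : Finset α) (v : α → ℝ) (s l Δ : ℝ)
    (hl : 0 < l) (hΔ : 0 < Δ) (hv : l ^ 2 * ∑ x ∈ X, v x ^ 2 ≤ Δ ^ 2) :
    ∑ A ∈ X.powerset, Real.exp (s * (|∑ x ∈ X, v x * sgn A x| / Δ)) ≤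
      2 ^ X.card * (2 * Real.exp (s ^ 2 / (2 * l ^ 2))) := by
  have hb : ∀ t : ℝ, t ^ 2 = (s / Δ) ^ 2 → t ^ 2 * (∑ x ∈ X, v x ^ 2) / 2 ≤ s ^ 2 / (2 * l ^ 2) := by
    intro t ht
    rw [ht, div_pow, div_mul_eq_mul_div, div_div, div_le_div_iff₀ (by positivity) (by positivity)]
    nlinarith [sq_nonneg s]
  have m1 := (mgf_bound X v (s / Δ)).trans (mul_le_mul_of_nonneg_left
    (Real.exp_le_exp.mpr (hb _ rfl)) (by positivity))
  have m2 := (mgf_bound X v (-(s / Δ))).trans (mul_le_mul_of_nonneg_left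
    (Real.exp_le_exp.mpr (hb _ (by ring))) (by positivity))
  have h : ∀ A ∈ X.powerset, Real.exp (s * (|∑ x ∈ X, v x * sgn A x| / Δ)) ≤
      Real.exp ((s / Δ) * ∑ x ∈ X, v x * sgn A x) +
      Real.exp (-(s / Δ) * ∑ x ∈ X, v x * sgn A x) := by
    intro A _
    rcases abs_cases (∑ x ∈ X, v x * sgn A x) with ⟨h, _⟩ | ⟨h, _⟩
    · rw [h]
      have e : s * ((∑ x ∈ X, v x * sgn A x) / Δ) = (s / Δ) * ∑ x ∈ X, v x * sgn A x := by ring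
      rw [e]
      linarith [Real.exp_pos (-(s / Δ) * ∑ x ∈ X, v x * sgn A x)]
    · rw [h]
      have e : s * (-(∑ x ∈ X, v x * sgn A x) / Δ) = -(s / Δ) * ∑ x ∈ X, v x * sgn A x := by ring
      rw [e]
      linarith [Real.exp_pos ((s / Δ) * ∑ x ∈ X, v x * sgn A x)]
  refine (sum_le_sum h).trans ?_
  rw [sum_add_distrib]
  linarith

/-- bound for the expected absolute value of the rounded discrepancy -/
noncomputable def MB (l : ℝ) : ℝ :=
  if 1 ≤ l then 2 * Real.exp (-(l ^ 2 / 2)) else 4 / l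

lemma abs_round_le (y : ℝ) : (|(round y : ℝ)|) ≤ 2 * |y| := by
  have h := abs_sub_round y
  by_cases hy : |y| < 1 / 2
  · have : round y = 0 := by
      rw [round_eq_zero_iff]
      rw [abs_lt] at hy
      constructor <;> linarith
    rw [this]; simp
  · have h1 : |(round y : ℝ)| ≤ |y| + |y - round y| := by
      have := abs_sub_abs_le_abs_sub (round y : ℝ) y
      rw [abs_sub_comm] at this
      linarith
    linarith

lemma abs_round_lt (y : ℝ) (hy : |y| < 1 / 2) : round y = 0 := by
  rw [round_eq_zero_iff]
  rw [abs_lt] at hy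
  constructor <;> linarith

lemma round_mean {α : Type} [DecidableEq α] (X : Finset α) (v : α → ℝ) (l Δ : ℝ)
    (hl : 0 < l) (hΔ : 0 < Δ) (hv : l ^ 2 * ∑ x ∈ X, v x ^ 2 ≤ Δ ^ 2) :
    ∑ A ∈ X.powerset, |(round ((∑ x ∈ X, v x * sgn A x) / (2 * Δ)) : ℝ)| ≤
      2 ^ X.card * MB l := by
  have hz : ∀ A : Finset α, 2 * |(∑ x ∈ X, v x * sgn A x) / (2 * Δ)| =
      |∑ x ∈ X, v x * sgn A x| / Δ := by
    intro A
    rw [abs_div, abs_of_pos (show 0 < 2 * Δ by linarith)]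
    field_simp
  unfold MB
  split_ifs with h1
  · have := mgf_abs X v (l ^ 2) l Δ hl hΔ hv
    have h2 : ∀ A ∈ X.powerset, |(round ((∑ x ∈ X, v x * sgn A x) / (2 * Δ)) : ℝ)| ≤
        Real.exp (-l ^ 2) * Real.exp (l ^ 2 * (|∑ x ∈ X, v x * sgn A x| / Δ)) := by
      intro A _
      rw [← hz A]
      set y := (∑ x ∈ X, v x * sgn A x) / (2 * Δ)
      by_cases hy : |y| < 1 / 2
      · rw [abs_round_lt y hy]; simp only [Int.cast_zero, abs_zero]; positivity
      · push Not at hy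
        refine (abs_round_le y).trans ?_
        rw [← Real.exp_add]
        have : -l ^ 2 + l ^ 2 * (2 * |y|) = l ^ 2 * (2 * |y| - 1) := by ring
        rw [this]
        have h3 : 2 * |y| - 1 ≤ l ^ 2 * (2 * |y| - 1) :=
          le_mul_of_one_le_left (by linarith) (one_le_pow₀ h1)
        have := Real.add_one_le_exp (l ^ 2 * (2 * |y| - 1))
        linarith
    refine (sum_le_sum h2).trans ?_
    rw [← mul_sum]
    refine (mul_le_mul_of_nonneg_left this (Real.exp_pos _).le).trans (le_of_eq ?_)
    have e : (l ^ 2) ^ 2 / (2 * l ^ 2) = l ^ 2 / 2 := by field_simp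
    rw [e]
    have e2 : -(l ^ 2 / 2) = -l ^ 2 + l ^ 2 / 2 := by ring
    rw [e2, Real.exp_add]
    ring
  · have := mgf_abs X v l l Δ hl hΔ hv
    have h2 : ∀ A ∈ X.powerset, |(round ((∑ x ∈ X, v x * sgn A x) / (2 * Δ)) : ℝ)| ≤
        l⁻¹ * Real.exp (l * (|∑ x ∈ X, v x * sgn A x| / Δ)) := by
      intro A _
      refine (abs_round_le _).trans ?_
      rw [hz A]
      have := Real.add_one_le_exp (l * (|∑ x ∈ X, v x * sgn A x| / Δ))
      rw [inv_mul_eq_div, le_div_iff₀ hl]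
      linarith
    refine (sum_le_sum h2).trans ?_
    rw [← mul_sum]
    refine (mul_le_mul_of_nonneg_left this (by positivity)).trans ?_
    have e : l ^ 2 / (2 * l ^ 2) = 1 / 2 := by field_simp
    rw [e]
    have e3 : Real.exp (1 / 2) ≤ 2 := by
      have h := Real.exp_one_lt_d9
      have : Real.exp (1/2) * Real.exp (1/2) = Real.exp 1 := by rw [← Real.exp_add]; norm_num
      nlinarith [Real.exp_pos (1/2)]
    have : l⁻¹ * (2 ^ X.card * (2 * Real.exp (1 / 2))) ≤ l⁻¹ * (2 ^ X.card * (2 * 2)) := by gcongr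
    refine this.trans (le_of_eq ?_)
    ring

lemma gibbs {σ τ : Type} [DecidableEq τ] (Ω : Finset σ) (hΩ : Ω.Nonempty) (b : σ → τ)
    (c : τ → ℝ) (E : ℝ)
    (hk : ∑ z ∈ Ω.image b, Real.exp (-c z) ≤ 1)
    (hE : ∑ w ∈ Ω, c (b w) ≤ Ω.card * E) :
    ∃ z, (Ω.card : ℝ) * Real.exp (-E) ≤ (Ω.filter (fun w => b w = z)).card := by
  by_contra! hcon
  have hN : (0:ℝ) < Ω.card := by exact_mod_cast card_pos.mpr hΩ
  have h1 : ∀ w ∈ Ω, 1 - c (b w) + E < Real.exp (-c (b w)) *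
      (Ω.card / ((Ω.filter (fun w' => b w' = b w)).card : ℝ)) := by
    intro w hw
    have hkpos : (0:ℝ) < (Ω.filter (fun w' => b w' = b w)).card := by
      exact_mod_cast card_pos.mpr ⟨w, by simp [hw]⟩
    have h2 := hcon (b w)
    have h3 : Real.exp E < Ω.card / ((Ω.filter (fun w' => b w' = b w)).card : ℝ) := by
      rw [lt_div_iff₀ hkpos]
      rw [Real.exp_neg] at h2
      have := Real.exp_pos E
      rw [← div_eq_mul_inv, lt_div_iff₀ this] at h2
      linarith
    have h4 := Real.add_one_le_exp (-c (b w) + E)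
    rw [Real.exp_add] at h4
    have := mul_lt_mul_of_pos_left h3 (Real.exp_pos (-c (b w)))
    linarith
  have h5 := sum_lt_sum_of_nonempty hΩ h1
  have h6 : ∑ w ∈ Ω, Real.exp (-c (b w)) *
      (Ω.card / ((Ω.filter (fun w' => b w' = b w)).card : ℝ)) =
      Ω.card * ∑ z ∈ Ω.image b, Real.exp (-c z) := by
    rw [← sum_fiberwise_of_maps_to (g := b) (t := Ω.image b) (fun w hw => mem_image_of_mem b hw),
      mul_sum]
    apply sum_congr rfl
    intro z hz
    have hkpos : (0:ℝ) < (Ω.filter (fun w' => b w' = z)).card := by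
      obtain ⟨w, hw, rfl⟩ := mem_image.mp hz
      exact_mod_cast card_pos.mpr ⟨w, by simp [hw]⟩
    rw [sum_congr rfl (g := fun _ => Real.exp (-c z) *
      (Ω.card / ((Ω.filter (fun w' => b w' = z)).card : ℝ)))]
    · rw [sum_const, nsmul_eq_mul]
      field_simp
    · intro w hw
      rw [(mem_filter.mp hw).2]
  rw [h6, sum_add_distrib, sum_sub_distrib] at h5
  simp only [sum_const, nsmul_eq_mul, mul_one] at h5
  nlinarith


lemma kraft (β : ℝ) (hβ : 0 < β) (s : Finset ℤ) :
    ∑ k ∈ s, Real.exp (-(β * |(k:ℝ)|)) ≤ (1 + Real.exp (-β)) / (1 - Real.exp (-β)) := by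
  set y := Real.exp (-β) with hy
  have hy0 : 0 < y := Real.exp_pos _
  have hy1 : y < 1 := by rw [hy, Real.exp_lt_one_iff]; linarith
  have g := hasSum_geometric_of_lt_one hy0.le hy1
  have h := HasSum.of_nat_of_neg_add_one (f := fun k : ℤ => Real.exp (-(β * |(k:ℝ)|)))
    (m := (1 - y)⁻¹) (m' := y * (1 - y)⁻¹) (by
      convert g using 1
      ext n
      rw [hy, ← Real.exp_nat_mul]
      congr 1
      simp
      ring) (by
      have e : (fun n : ℕ => Real.exp (-(β * |((-((n:ℤ)+1) : ℤ):ℝ)|))) = fun n => y * y ^ n := by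
        ext n
        rw [hy, ← Real.exp_nat_mul, ← Real.exp_add]
        congr 1
        push_cast
        rw [abs_of_nonpos (by have : (0:ℝ) ≤ n := n.cast_nonneg
                              linarith)]
        ring
      have g2 := g.mul_left y
      rw [← e] at g2
      exact g2)
  have := sum_le_hasSum s (fun k _ => (Real.exp_pos _).le) h
  refine this.trans (le_of_eq ?_)
  have : 1 - y ≠ 0 := by linarith
  field_simp

lemma cost_exists (p : ℕ) (hp : 1 ≤ p) : ∃ B : ℝ, 0 < B ∧ ∀ l : ℝ, 0 < l → ∃ a β : ℝ, 0 ≤ β ∧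
    (∀ s : Finset ℤ, ∑ k ∈ s, Real.exp (-(a + β * |(k:ℝ)|)) ≤ 1) ∧
    a + β * MB l ≤ B / l ∧ a + β * MB l ≤ B / l ^ p := by
  set B0 : ℝ := 8 * (2 ^ (p+1) * (p+1).factorial) with hB0
  have hB0pos : 0 < B0 := by positivity
  have hB8 : 8 ≤ B0 := by
    have h1 : (1:ℝ) ≤ 2 ^ (p+1) := one_le_pow₀ (by norm_num)
    have h2 : (1:ℝ) ≤ (p+1).factorial := by exact_mod_cast Nat.succ_le_of_lt (Nat.factorial_pos _)
    nlinarith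
  have hk : ∀ β : ℝ, 0 < β → ∀ s : Finset ℤ, ∑ k ∈ s, Real.exp (-(Real.log
      ((1 + Real.exp (-β)) / (1 - Real.exp (-β))) + β * |(k:ℝ)|)) ≤ 1 := by
    intro β hβ s
    have hy1 : Real.exp (-β) < 1 := by rw [Real.exp_lt_one_iff]; linarith
    have hpos : 0 < (1 + Real.exp (-β)) / (1 - Real.exp (-β)) := by
      apply div_pos
      · positivity
      · linarith
    have : ∀ k : ℤ, Real.exp (-(Real.log
      ((1 + Real.exp (-β)) / (1 - Real.exp (-β))) + β * |(k:ℝ)|)) =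
      ((1 + Real.exp (-β)) / (1 - Real.exp (-β)))⁻¹ * Real.exp (-(β * |(k:ℝ)|)) := by
      intro k
      rw [neg_add, Real.exp_add, Real.exp_neg (Real.log _), Real.exp_log hpos]
    simp_rw [this]
    rw [← mul_sum]
    rw [inv_mul_le_iff₀ hpos, mul_one]
    exact kraft β hβ s
  refine ⟨B0, hB0pos, fun l hl => ?_⟩
  by_cases h1 : 1 ≤ l
  · have hβ : 0 < l ^ 2 / 2 := by positivity
    refine ⟨_, l ^ 2 / 2, hβ.le, hk _ hβ, ?_⟩
    have hM : MB l = 2 * Real.exp (-(l ^ 2 / 2)) := by rw [MB, if_pos h1]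
    rw [hM]
    set y := Real.exp (-(l ^ 2 / 2)) with hy
    have hy0 : 0 < y := Real.exp_pos _
    have hl2 : 1 ≤ l ^ 2 := one_le_pow₀ h1
    have hy1 : y ≤ 2 / 3 := by
      have h3 : y ≤ Real.exp (-(1/2)) := by rw [hy]; apply Real.exp_le_exp.mpr; linarith
      have h4 := Real.add_one_le_exp (1/2 : ℝ)
      rw [Real.exp_neg] at h3
      refine h3.trans ?_
      rw [inv_le_comm₀ (Real.exp_pos _) (by norm_num)]
      linarith
    have ha : Real.log ((1 + y) / (1 - y)) ≤ 6 * y := by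
      have hpos : 0 < (1 + y) / (1 - y) := by apply div_pos <;> linarith
      refine (Real.log_le_sub_one_of_pos hpos).trans ?_
      rw [div_sub_one (by linarith), div_le_iff₀ (by linarith)]
      nlinarith
    have hmain : Real.log ((1 + y) / (1 - y)) + l ^ 2 / 2 * (2 * y) ≤ 8 * (l ^ 2 * y) := by
      nlinarith
    have hf := Real.pow_div_factorial_le_exp (l ^ 2 / 2) hβ.le (p + 1)
    have hexp : Real.exp (l ^ 2 / 2) = y⁻¹ := by rw [hy, Real.exp_neg, inv_inv]
    rw [hexp] at hf
    have hbig : 8 * (l ^ 2 * y) ≤ B0 / l ^ p := by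
      rw [le_div_iff₀ (by positivity), hB0]
      rw [div_pow, div_div, ← pow_mul, div_le_iff₀ (by positivity)] at hf
      rw [inv_mul_eq_div, le_div_iff₀ hy0] at hf
      have h5 : l ^ 2 * l ^ p ≤ l ^ (2 * (p + 1)) := by
        rw [← pow_add]; exact pow_le_pow_right₀ h1 (by omega)
      nlinarith
    have hfin := hmain.trans hbig
    refine ⟨hfin.trans ?_, hfin⟩
    apply div_le_div_of_nonneg_left hB0pos.le hl
    calc l = l ^ 1 := (pow_one l).symm
      _ ≤ l ^ p := pow_le_pow_right₀ h1 hp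
  · push Not at h1
    refine ⟨_, l, hl.le, hk _ hl, ?_⟩
    have hM : MB l = 4 / l := by rw [MB, if_neg (by linarith)]
    rw [hM]
    have hM2 : l * (4 / l) = 4 := by field_simp
    rw [hM2]
    set y := Real.exp (-l) with hy
    have hy0 : 0 < y := Real.exp_pos _
    have hy1 : y ≤ 1 - l / 2 := by
      rw [hy, Real.exp_neg]
      have h4 := Real.add_one_le_exp l
      have : (Real.exp l)⁻¹ ≤ (l + 1)⁻¹ := inv_anti₀ (by linarith) h4
      refine this.trans ?_
      rw [inv_le_iff_one_le_mul₀ (by linarith)]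
      nlinarith
    have ha : Real.log ((1 + y) / (1 - y)) ≤ 4 / l := by
      have hpos : 0 < (1 + y) / (1 - y) := by apply div_pos <;> linarith
      refine (Real.log_le_self hpos.le).trans ?_
      rw [div_le_div_iff₀ (by linarith) hl]
      nlinarith
    have h4l : 4 ≤ 4 / l := by rw [le_div_iff₀ hl]; linarith
    have hfin : Real.log ((1 + y) / (1 - y)) + 4 ≤ B0 / l := by
      have : 8 / l ≤ B0 / l := by gcongr
      have e : 8 / l = 4 / l + 4 / l := by ring
      linarith
    refine ⟨hfin, hfin.trans ?_⟩
    apply div_le_div_of_nonneg_left hB0pos.le (by positivity)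
    calc l ^ p ≤ l ^ 1 := pow_le_pow_of_le_one hl.le h1.le hp
      _ = l := pow_one l

lemma hamming {α : Type} [DecidableEq α] (X A : Finset α) (Q : Finset (Finset α))
    (hQ : Q ⊆ X.powerset) (hn : 1 ≤ X.card)
    (hcard : (2:ℝ) ^ X.card * Real.exp (-((X.card : ℝ) / 10)) ≤ Q.card) :
    ∃ B ∈ Q, (X.card : ℝ) / 10 ≤ (X.filter (fun x => ¬ (x ∈ A ↔ x ∈ B))).card := by
  by_contra hcon0
  have hcon : ∀ B ∈ Q, ((X.filter (fun x => ¬ (x ∈ A ↔ x ∈ B))).card : ℝ) < (X.card : ℝ) / 10 :=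
    fun B hB => not_le.mp (fun h => hcon0 ⟨B, hB, h⟩)
  have h1 : ∀ B : Finset α, ∏ x ∈ X, (if x ∈ B then (if x ∈ A then (1:ℝ) else 1/4) else
      (if x ∈ A then (1/4:ℝ) else 1)) = (1/4 : ℝ) ^ (X.filter (fun x => ¬ (x ∈ A ↔ x ∈ B))).card := by
    intro B
    rw [← prod_const, prod_filter]
    apply prod_congr rfl
    intro x _
    by_cases h : x ∈ A <;> by_cases h' : x ∈ B <;> simp [h, h']
  have h2 := sum_powerset_prod X (fun x => if x ∈ A then (1:ℝ) else 1/4)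
    (fun x => if x ∈ A then (1/4:ℝ) else 1)
  have h3 : ∏ x ∈ X, ((if x ∈ A then (1:ℝ) else 1/4) + (if x ∈ A then (1/4:ℝ) else 1)) =
      (5/4) ^ X.card := by
    rw [← prod_const]
    apply prod_congr rfl
    intro x _
    split_ifs <;> norm_num
  rw [h3] at h2
  simp_rw [h1] at h2
  have h4 : ∀ B ∈ Q, Real.exp (-((X.card:ℝ) / 5)) ≤
      (1/4 : ℝ) ^ (X.filter (fun x => ¬ (x ∈ A ↔ x ∈ B))).card := by
    intro B hB
    have := hcon B hB
    set m := (X.filter (fun x => ¬ (x ∈ A ↔ x ∈ B))).card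
    have e4 : Real.exp (-2) ≤ 1/4 := by
      have h := Real.add_one_le_exp (1:ℝ)
      have h2 : Real.exp 2 = Real.exp 1 * Real.exp 1 := by rw [← Real.exp_add]; norm_num
      rw [Real.exp_neg, inv_le_comm₀ (Real.exp_pos _) (by norm_num), h2]
      nlinarith
    calc _ ≤ Real.exp (m * (-2)) := by apply Real.exp_le_exp.mpr; linarith
      _ = (Real.exp (-2)) ^ m := by rw [Real.exp_nat_mul]
      _ ≤ _ := by gcongr
  have h5 : (Q.card : ℝ) * Real.exp (-((X.card:ℝ) / 5)) ≤ (5/4) ^ X.card := by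
    rw [← h2, ← nsmul_eq_mul]
    refine (card_nsmul_le_sum _ _ _ h4).trans ?_
    apply sum_le_sum_of_subset_of_nonneg hQ
    intros; positivity
  have h6 : (2 * Real.exp (-(3/10))) ^ X.card ≤ (5/4 : ℝ) ^ X.card := by
    refine le_trans (le_of_eq ?_) ((mul_le_mul_of_nonneg_right hcard (Real.exp_pos _).le).trans h5)
    rw [mul_pow, ← Real.exp_nat_mul, mul_assoc, ← Real.exp_add]
    congr 2
    ring
  have h7 : (5/4 : ℝ) < 2 * Real.exp (-(3/10)) := by
    have := Real.add_one_le_exp (-(3/10) : ℝ)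
    linarith
  have := pow_lt_pow_left₀ h7 (by norm_num) (show X.card ≠ 0 by omega)
  linarith

lemma partial_coloring {α ι : Type} [DecidableEq α] [Fintype ι] [DecidableEq ι] (X : Finset α)
    (hn : 1 ≤ X.card) (v : ι → α → ℝ) (Δ l a β : ι → ℝ) (hΔ : ∀ i, 0 < Δ i) (hl : ∀ i, 0 < l i)
    (hβ : ∀ i, 0 ≤ β i)
    (hv : ∀ i, l i ^ 2 * ∑ x ∈ X, v i x ^ 2 ≤ Δ i ^ 2)
    (hkr : ∀ i, ∀ s : Finset ℤ, ∑ k ∈ s, Real.exp (-(a i + β i * |(k:ℝ)|)) ≤ 1)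
    (hcost : ∑ i, (a i + β i * MB (l i)) ≤ (X.card : ℝ) / 10) :
    ∃ χ : α → ℤ, (∀ x, χ x = 1 ∨ χ x = 0 ∨ χ x = -1) ∧
      (X.card : ℝ) / 10 ≤ (X.filter (fun x => χ x ≠ 0)).card ∧
      ∀ i, |∑ x ∈ X, v i x * (χ x : ℝ)| ≤ Δ i := by
  set b : Finset α → ι → ℤ := fun A i => round ((∑ x ∈ X, v i x * sgn A x) / (2 * Δ i)) with hb
  obtain ⟨z, hz⟩ := gibbs X.powerset ⟨∅, by simp⟩ b (fun z => ∑ i, (a i + β i * |(z i : ℝ)|))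
    ((X.card : ℝ) / 10) (by
      have hsub : X.powerset.image b ⊆ Fintype.piFinset (fun i => X.powerset.image (fun A => b A i)) := by
        intro z hz
        obtain ⟨A, hA, rfl⟩ := mem_image.mp hz
        rw [Fintype.mem_piFinset]
        intro i
        exact mem_image_of_mem _ hA
      refine (sum_le_sum_of_subset_of_nonneg hsub (fun _ _ _ => (Real.exp_pos _).le)).trans ?_
      have e : ∀ z : ι → ℤ, Real.exp (-∑ i, (a i + β i * |(z i : ℝ)|)) =
          ∏ i, Real.exp (-(a i + β i * |(z i : ℝ)|)) := by
        intro z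
        rw [← sum_neg_distrib, Real.exp_sum]
      simp_rw [e]
      rw [← prod_univ_sum (fun i => X.powerset.image (fun A => b A i))
        (fun i k => Real.exp (-(a i + β i * |(k : ℝ)|)))]
      apply prod_le_one
      · intro i _
        exact sum_nonneg (fun _ _ => (Real.exp_pos _).le)
      · intro i _
        exact hkr i _) (by
      rw [sum_comm, card_powerset]
      push_cast
      refine le_trans ?_ (mul_le_mul_of_nonneg_left hcost (by positivity))
      rw [mul_sum]
      apply sum_le_sum
      intro i _
      rw [sum_add_distrib, ← mul_sum]
      have := mul_le_mul_of_nonneg_left (round_mean X (v i) (l i) (Δ i) (hl i) (hΔ i) (hv i)) (hβ i)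
      simp only [sum_const, card_powerset, nsmul_eq_mul]
      push_cast
      simp only [hb]
      linarith)
  rw [card_powerset] at hz
  push_cast at hz
  have hne : (X.powerset.filter (fun w => b w = z)).Nonempty := by
    rw [← card_pos]
    have : (0:ℝ) < (X.powerset.filter (fun w => b w = z)).card := lt_of_lt_of_le (by positivity) hz
    exact_mod_cast this
  obtain ⟨A, hA⟩ := hne
  obtain ⟨B, hB, hAB⟩ := hamming X A _ (filter_subset _ _) hn hz
  refine ⟨fun x => if x ∈ A then (if x ∈ B then 0 else 1) else (if x ∈ B then -1 else 0), ?_, ?_, ?_⟩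
  · intro x
    dsimp only
    split_ifs <;> simp
  · refine hAB.trans (le_of_eq ?_)
    congr 2
    ext x
    by_cases h : x ∈ A <;> by_cases h' : x ∈ B <;> simp [h, h']
  · intro i
    have e : ∀ x, (((if x ∈ A then (if x ∈ B then 0 else 1) else (if x ∈ B then -1 else 0) : ℤ)) : ℝ)
        = (sgn A x - sgn B x) / 2 := by
      intro x
      unfold sgn
      by_cases h : x ∈ A <;> by_cases h' : x ∈ B <;> simp [h, h'] <;> norm_num
    simp_rw [e]
    have e2 : ∑ x ∈ X, v i x * ((sgn A x - sgn B x) / 2) =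
        Δ i * ((∑ x ∈ X, v i x * sgn A x) / (2 * Δ i) - (∑ x ∈ X, v i x * sgn B x) / (2 * Δ i)) := by
      have := (hΔ i).ne'
      rw [← sub_div, ← sum_sub_distrib]
      field_simp
      rw [mul_sum]
      apply sum_congr rfl; intros; ring
    have hr : b A i = b B i := by
      rw [(mem_filter.mp hA).2, (mem_filter.mp hB).2]
    simp only [hb] at hr
    rw [e2, abs_mul, abs_of_pos (hΔ i)]
    have r1 := abs_sub_round ((∑ x ∈ X, v i x * sgn A x) / (2 * Δ i))
    have r2 := abs_sub_round ((∑ x ∈ X, v i x * sgn B x) / (2 * Δ i))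
    rw [hr] at r1
    rw [abs_le] at r1 r2
    refine mul_le_of_le_one_right (hΔ i).le ?_
    rw [abs_le]
    constructor <;> linarith [r1.1, r1.2, r2.1, r2.2]


lemma geom_abs (θ : ℝ) (h0 : 0 < θ) (h1 : θ < 1) (L T : ℕ) :
    ∑ i ∈ range L, θ ^ ((i - T) + (T - i)) ≤ 2 / (1 - θ) := by
  have hg : ∀ k, ∑ i ∈ range k, θ ^ i ≤ (1 - θ)⁻¹ := fun k =>
    sum_le_hasSum _ (fun i _ => by positivity) (hasSum_geometric_of_lt_one h0.le h1)
  have hsub : range L ⊆ range (T + L) := range_subset_range.mpr (by omega)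
  refine (sum_le_sum_of_subset_of_nonneg hsub (fun _ _ _ => by positivity)).trans ?_
  rw [sum_range_add]
  have e1 : ∑ i ∈ range T, θ ^ ((i - T) + (T - i)) ≤ ∑ i ∈ range T, θ ^ i := by
    rw [← sum_range_reflect (fun i => θ ^ i) T]
    apply sum_le_sum
    intro i hi
    have := mem_range.mp hi
    exact pow_le_pow_of_le_one h0.le h1.le (by omega)
  have e2 : ∑ i ∈ range L, θ ^ ((T + i - T) + (T - (T + i))) = ∑ i ∈ range L, θ ^ i := by
    apply sum_congr rfl
    intro i _
    congr 1
    omega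
  rw [e2]
  have := hg T
  have := hg L
  have : 2 / (1 - θ) = (1 - θ)⁻¹ + (1 - θ)⁻¹ := by ring
  linarith

lemma level_cost (K τ D A B n c N : ℝ) (q i T : ℕ) (hK : 1 ≤ K) (hτ : 1 < τ) (hD : τ ^ 4 ≤ D)
    (hDq : D ≤ τ ^ q) (hA : 0 < A) (hB : 0 < B) (hn : 0 ≤ n) (hT : D ^ T ≤ D * n) (hN0 : 0 ≤ N)
    (hN : N ≤ A * D ^ (i + 1))
    (hc : c ≤ B / (K * τ ^ (2 * i) / τ ^ (2 * T) * τ⁻¹ ^ ((i - T) + (T - i))))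
    (hc' : c ≤ B / (K * τ ^ (2 * i) / τ ^ (2 * T) * τ⁻¹ ^ ((i - T) + (T - i))) ^ (q + 1)) :
    N * c ≤ A * D ^ 2 * B / K * n * τ⁻¹ ^ ((i - T) + (T - i)) := by
  have hτ0 : 0 < τ := by linarith
  have hD0 : 0 < D := lt_of_lt_of_le (by positivity) hD
  rcases le_total T i with h | h
  · obtain ⟨u, rfl⟩ := Nat.exists_eq_add_of_le h
    have e : (T + u - T) + (T - (T + u)) = u := by omega
    rw [e] at hc' ⊢
    have el : K * τ ^ (2 * (T + u)) / τ ^ (2 * T) * τ⁻¹ ^ u = K * τ ^ u := by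
      rw [inv_pow]; field_simp; ring
    rw [el] at hc'
    have hKp : K ≤ K ^ (q + 1) := by
      calc K = K ^ 1 := (pow_one K).symm
        _ ≤ _ := pow_le_pow_right₀ hK (by omega)
    have hc2 : c ≤ B / (K * (τ ^ u) ^ (q + 1)) := by
      refine hc'.trans ?_
      rw [mul_pow]
      gcongr
    have hN2 : N ≤ A * (D * n) * (τ ^ q) ^ u * D := by
      refine hN.trans ?_
      calc A * D ^ (T + u + 1) = A * D ^ T * D ^ u * D := by ring
        _ ≤ _ := by gcongr
    have hb0 : 0 ≤ B / (K * (τ ^ u) ^ (q + 1)) := by positivity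
    calc N * c ≤ N * (B / (K * (τ ^ u) ^ (q + 1))) := by gcongr
      _ ≤ (A * (D * n) * (τ ^ q) ^ u * D) * (B / (K * (τ ^ u) ^ (q + 1))) := by gcongr
      _ = _ := by
        rw [inv_pow, pow_succ (τ ^ u) q, ← pow_mul, ← pow_mul, mul_comm u q]
        field_simp
  · obtain ⟨u, rfl⟩ := Nat.exists_eq_add_of_le h
    have e : (i - (i + u)) + (i + u - i) = u := by omega
    rw [e] at hc ⊢
    have el : K * τ ^ (2 * i) / τ ^ (2 * (i + u)) * τ⁻¹ ^ u = K / τ ^ (3 * u) := by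
      rw [inv_pow, mul_add, pow_add, mul_comm 3 u, mul_comm 2 u, pow_mul τ u 2, pow_mul τ u 3]; field_simp
    rw [el] at hc
    have hN2 : N ≤ A * D ^ 2 * n / τ ^ (4 * u) := by
      refine hN.trans ?_
      rw [le_div_iff₀ (by positivity), pow_mul τ 4 u]
      calc A * D ^ (i + 1) * (τ ^ 4) ^ u ≤ A * D ^ (i + 1) * D ^ u := by gcongr
        _ = A * D * D ^ (i + u) := by ring
        _ ≤ A * D * (D * n) := by gcongr
        _ = _ := by ring
    calc N * c ≤ N * (B / (K / τ ^ (3 * u))) := by gcongr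
      _ ≤ (A * D ^ 2 * n / τ ^ (4 * u)) * (B / (K / τ ^ (3 * u))) := by gcongr
      _ = _ := by
        rw [inv_pow, mul_comm 3 u, mul_comm 4 u, pow_mul τ u 4, pow_mul τ u 3]; field_simp

lemma final_exp (d τ n : ℝ) (T : ℕ) (hd : 1 < d) (hτ0 : 0 < τ) (hτ : τ ^ 4 = 2) (hn : 0 < n)
    (hT : n ≤ ((2:ℝ) ^ d) ^ T) : Real.sqrt n / τ ^ (2 * T) ≤ n ^ ((1:ℝ) / 2 - 1 / (2 * d)) := by
  rw [Real.rpow_sub hn, ← Real.sqrt_eq_rpow]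
  apply div_le_div_of_nonneg_left (Real.sqrt_nonneg _) (Real.rpow_pos_of_pos hn _)
  have h0 : (0:ℝ) ≤ τ ^ (2 * T) := by positivity
  have e : ((2:ℝ) ^ d) ^ T = (τ ^ (2 * T)) ^ (2 * d) := by
    rw [Real.rpow_pow_comm (by norm_num), Real.rpow_mul h0]
    congr 1
    rw [Real.rpow_two, ← hτ]
    ring
  rw [e] at hT
  calc n ^ (1 / (2 * d)) ≤ ((τ ^ (2 * T)) ^ (2 * d)) ^ (1 / (2 * d)) :=
        Real.rpow_le_rpow hn.le hT (by positivity)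
    _ = _ := by
      rw [← Real.rpow_mul h0, mul_one_div_cancel (by positivity), Real.rpow_one]


lemma vec_sq {α : Type} [DecidableEq α] (X S P : Finset α) (hS : S ⊆ X) (hP : P ⊆ X) :
    ∑ x ∈ X, ((if x ∈ S then (1:ℝ) else 0) - (if x ∈ P then 1 else 0)) ^ 2 =
      ((S \ P).card + (P \ S).card : ℝ) := by
  have e : ∀ x, ((if x ∈ S then (1:ℝ) else 0) - (if x ∈ P then 1 else 0)) ^ 2 =
      (if x ∈ S \ P then 1 else 0) + (if x ∈ P \ S then 1 else 0) := by
    intro x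
    by_cases h : x ∈ S <;> by_cases h' : x ∈ P <;> simp [h, h']
  simp_rw [e]
  rw [sum_add_distrib, sum_boole, sum_boole, filter_mem_eq_inter, filter_mem_eq_inter,
    inter_eq_right.mpr (sdiff_subset.trans hS), inter_eq_right.mpr (sdiff_subset.trans hP)]

lemma vec_dot {α : Type} [DecidableEq α] (X S P : Finset α) (hS : S ⊆ X) (hP : P ⊆ X)
    (χ : α → ℝ) :
    ∑ x ∈ X, ((if x ∈ S then (1:ℝ) else 0) - (if x ∈ P then 1 else 0)) * χ x =
      ∑ x ∈ S, χ x - ∑ x ∈ P, χ x := by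
  simp_rw [sub_mul, ite_mul, one_mul, zero_mul]
  rw [sum_sub_distrib, ← sum_filter, ← sum_filter, filter_mem_eq_inter, filter_mem_eq_inter,
    inter_eq_right.mpr hS, inter_eq_right.mpr hP]

lemma shatter_partial (d C : ℝ) (hd : 1 < d) (hC : 0 < C) :
    ∃ K : ℝ, 0 < K ∧
      ∀ (α : Type) [DecidableEq α] (X : Finset α) (P : Finset (Finset α)),
        1 ≤ X.card → (∀ S ∈ P, S ⊆ X) →
        (∀ Y ⊆ X, 1 ≤ Y.card → ((P.image (· ∩ Y)).card : ℝ) ≤ C * (Y.card : ℝ) ^ d) →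
        ∃ χ : α → ℤ, (∀ x, χ x = 1 ∨ χ x = 0 ∨ χ x = -1) ∧
          (X.card : ℝ) / 10 ≤ (X.filter (fun x => χ x ≠ 0)).card ∧
          ∀ S ∈ P, |(∑ x ∈ S, (χ x : ℝ))| ≤ K * (X.card : ℝ) ^ ((1 : ℝ) / 2 - 1 / (2 * d)) := by
  obtain ⟨A, hA, hlev⟩ := exists_levels d C hd hC
  obtain ⟨q, hq⟩ := exists_nat_ge (4 * d)
  obtain ⟨B, hB, hcost⟩ := cost_exists (q + 1) (by omega)
  obtain ⟨τ, hτ0, hτ4⟩ : ∃ τ : ℝ, 0 < τ ∧ τ ^ 4 = 2 := by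
    refine ⟨(2:ℝ) ^ ((1:ℝ) / 4), by positivity, ?_⟩
    rw [← Real.rpow_natCast, ← Real.rpow_mul (by norm_num)]
    norm_num
  have hτ1 : 1 < τ := by
    by_contra h
    have := pow_le_one₀ (n := 4) hτ0.le (not_lt.mp h)
    linarith
  set D : ℝ := (2:ℝ) ^ d with hDdef
  have hD4 : τ ^ 4 ≤ D := by
    rw [hτ4]
    calc (2:ℝ) = 2 ^ (1:ℝ) := (Real.rpow_one 2).symm
      _ ≤ 2 ^ d := Real.rpow_le_rpow_of_exponent_le (by norm_num) hd.le
  have hDq : D ≤ τ ^ q := by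
    rw [hDdef, ← hτ4, ← Real.rpow_natCast τ 4, ← Real.rpow_mul hτ0.le, ← Real.rpow_natCast τ q]
    apply Real.rpow_le_rpow_of_exponent_le hτ1.le
    exact_mod_cast hq
  have hD1 : 1 < D := by rw [hτ4] at hD4; linarith
  have hD0 : 0 < D := by linarith
  have hθ0 : 0 < τ⁻¹ := by positivity
  have hθ1 : τ⁻¹ < 1 := inv_lt_one_of_one_lt₀ hτ1
  set G : ℝ := 2 / (1 - τ⁻¹) with hG
  have hG0 : 0 < G := div_pos (by norm_num) (by linarith)
  set K : ℝ := max 1 (10 * (A * D ^ 2 * B) * G) with hKdef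
  have hK1 : 1 ≤ K := le_max_left _ _
  have hK0 : 0 < K := by linarith
  have hK2 : 10 * (A * D ^ 2 * B) * G ≤ K := le_max_right _ _
  refine ⟨K * G, by positivity, ?_⟩
  intro α _ X P hn hP hsh
  set n := X.card with hndef
  have hnR : (1:ℝ) ≤ n := by exact_mod_cast hn
  have hn0 : (0:ℝ) < n := by linarith
  obtain ⟨T, hT1, hT2⟩ : ∃ T : ℕ, D ^ T ≤ D * n ∧ (n:ℝ) ≤ D ^ T := by
    obtain ⟨t, h1, h2⟩ := exists_nat_pow_near hnR hD1
    refine ⟨t + 1, ?_, h2.le⟩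
    rw [pow_succ, mul_comm]
    gcongr
  have key : ∀ i : ℕ, ∃ F : Finset (Finset α), (i ≠ 0 → F ⊆ P) ∧ (i = 0 → F = {∅}) ∧
      (i ≠ 0 → (F.card : ℝ) ≤ A * D ^ i) ∧
      ∀ S ∈ P, ∃ T ∈ F, ((S \ T).card + (T \ S).card : ℝ) ≤ n / 2 ^ i := by
    intro i
    by_cases hi : i = 0
    · subst hi
      refine ⟨{∅}, by simp, by simp, by simp, ?_⟩
      intro S hS
      refine ⟨∅, by simp, ?_⟩
      have := card_le_card (hP S hS)
      simpa using this
    · obtain ⟨F, hF, hc, hd⟩ := hlev α X P hn hP hsh i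
      refine ⟨F, fun _ => hF, fun h => absurd h hi, fun _ => ?_, ?_⟩
      · rw [hDdef, Real.rpow_pow_comm (by norm_num)]
        exact hc
      · intro S hS
        obtain ⟨T, hT, h⟩ := hd S hS
        exact ⟨T, hT, h.le⟩
  choose F hFP hF0 hFc hFd using key
  choose! p hpF hpd using hFd
  have hFX : ∀ i, ∀ S ∈ F i, S ⊆ X := by
    intro i S hS
    by_cases hi : i = 0
    · rw [hF0 i hi, mem_singleton] at hS
      rw [hS]; exact empty_subset _
    · exact hP S (hFP i hi hS)
  choose! ac bc hbc hkr hc1 hc2 using hcost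
  set Δ : ℕ → ℝ := fun i => K * (Real.sqrt n / τ ^ (2 * T)) * τ⁻¹ ^ ((i - T) + (T - i)) with hΔ
  set l : ℕ → ℝ := fun i => K * τ ^ (2 * i) / τ ^ (2 * T) * τ⁻¹ ^ ((i - T) + (T - i)) with hl
  have hΔ0 : ∀ i, 0 < Δ i := fun i => by simp only [hΔ]; positivity
  have hl0 : ∀ i, 0 < l i := fun i => by simp only [hl]; positivity
  have hlΔ : ∀ i, l i ^ 2 * (n / 2 ^ i) = Δ i ^ 2 := by
    intro i
    simp only [hl, hΔ]
    have e1 : (2:ℝ) ^ i = (τ ^ (2 * i)) ^ 2 := by rw [← hτ4]; ring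
    rw [e1]
    simp only [mul_pow, div_pow]
    rw [Real.sq_sqrt hn0.le]
    field_simp
  set W : Finset (Σ _ : ℕ, Finset α) := (range n).sigma (fun i => F (i + 1)) with hW
  have hWm : ∀ w ∈ W, w.1 < n ∧ w.2 ∈ F (w.1 + 1) := by
    intro w hw
    have := mem_sigma.mp hw
    exact ⟨mem_range.mp this.1, this.2⟩
  obtain ⟨χ, hχ, hχc, hχd⟩ := partial_coloring (ι := {w // w ∈ W}) X hn
    (fun w x => (if x ∈ w.1.2 then (1:ℝ) else 0) - (if x ∈ p w.1.1 w.1.2 then 1 else 0))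
    (fun w => Δ w.1.1) (fun w => l w.1.1) (fun w => ac (l w.1.1)) (fun w => bc (l w.1.1))
    (fun w => hΔ0 _) (fun w => hl0 _) (fun w => hbc _ (hl0 _)) (by
      rintro ⟨⟨i, S⟩, hw⟩
      obtain ⟨h1, h2⟩ := hWm _ hw
      dsimp only at h1 h2 ⊢
      have hSP : S ∈ P := hFP (i + 1) (by omega) h2
      rw [vec_sq X S (p i S) (hP S hSP) (hFX i _ (hpF i S hSP)), ← hlΔ i]
      exact mul_le_mul_of_nonneg_left (hpd i S hSP) (by positivity))
    (fun w => hkr _ (hl0 _)) (by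
      rw [sum_coe_sort W (fun w => ac (l w.1) + bc (l w.1) * MB (l w.1)), hW, sum_sigma]
      simp only [sum_const, nsmul_eq_mul]
      have hstep : ∀ i ∈ range n, ((F (i + 1)).card : ℝ) * (ac (l i) + bc (l i) * MB (l i)) ≤
          A * D ^ 2 * B / K * n * τ⁻¹ ^ ((i - T) + (T - i)) := by
        intro i _
        exact level_cost K τ D A B n _ _ q i T hK1 hτ1 hD4 hDq hA hB hn0.le hT1 (Nat.cast_nonneg _)
          (hFc (i + 1) (by omega)) (hc1 _ (hl0 i)) (hc2 _ (hl0 i))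
      refine (sum_le_sum hstep).trans ?_
      rw [← mul_sum]
      have hg := geom_abs τ⁻¹ hθ0 hθ1 n T
      calc _ ≤ A * D ^ 2 * B / K * n * G := by gcongr
        _ = (A * D ^ 2 * B * G) / K * n := by ring
        _ ≤ (1 / 10) * n := by
          refine mul_le_mul_of_nonneg_right ?_ hn0.le
          rw [div_le_iff₀ hK0]
          linarith
        _ = _ := by ring)
  refine ⟨χ, hχ, hχc, ?_⟩
  have hind : ∀ i ≤ n, ∀ S ∈ F i, |(∑ x ∈ S, (χ x : ℝ))| ≤ ∑ j ∈ range i, Δ j := by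
    intro i
    induction i with
    | zero =>
      intro _ S hS
      rw [hF0 0 rfl, mem_singleton] at hS
      subst hS
      simp
    | succ i ih =>
      intro hi S hS
      have hSP : S ∈ P := hFP (i + 1) (by omega) hS
      have h1 := ih (by omega) (p i S) (hpF i S hSP)
      have h2 := hχd ⟨⟨i, S⟩, mem_sigma.mpr ⟨mem_range.mpr (Nat.lt_of_succ_le hi), hS⟩⟩
      dsimp only at h2
      rw [vec_dot X S (p i S) (hP S hSP) (hFX i _ (hpF i S hSP))] at h2
      rw [sum_range_succ]
      rw [abs_le] at *
      constructor <;> linarith [h1.1, h1.2, h2.1, h2.2]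
  intro S hS
  have hSn : S ∈ F n := by
    have h1 := hpd n S hS
    have h2 := hpF n S hS
    have h3 : (n:ℝ) / 2 ^ n < 1 := by
      rw [div_lt_one (by positivity)]
      exact_mod_cast Nat.lt_two_pow_self
    have h4 : (S \ p n S).card + (p n S \ S).card < 1 := by
      have := h1.trans_lt h3
      exact_mod_cast this
    have h5 : S \ p n S = ∅ := card_eq_zero.mp (by omega)
    have h6 : p n S \ S = ∅ := card_eq_zero.mp (by omega)
    rw [sdiff_eq_empty_iff_subset] at h5 h6
    rwa [← Subset.antisymm h5 h6] at h2
  refine (hind n le_rfl S hSn).trans ?_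
  simp only [hΔ]
  rw [← mul_sum]
  have hg := geom_abs τ⁻¹ hθ0 hθ1 n T
  have hf := final_exp d τ n T hd hτ0 hτ4 hn0 hT2
  calc _ ≤ K * (n:ℝ) ^ ((1 : ℝ) / 2 - 1 / (2 * d)) * G := by gcongr
    _ = _ := by ring


lemma full_coloring (d C : ℝ) (hd : 1 < d) (hC : 0 < C) :
    ∃ K : ℝ, 0 < K ∧
      ∀ (α : Type) [DecidableEq α] (N : ℕ) (X : Finset α) (P : Finset (Finset α)),
        X.card = N → (∀ S ∈ P, S ⊆ X) →
        (∀ Y ⊆ X, 1 ≤ Y.card → ((P.image (· ∩ Y)).card : ℝ) ≤ C * (Y.card : ℝ) ^ d) →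
        ∃ χ : α → ℤ, (∀ x ∈ X, χ x = 1 ∨ χ x = -1) ∧
          ∀ S ∈ P, |(∑ x ∈ S, (χ x : ℝ))| ≤ K * (X.card : ℝ) ^ ((1 : ℝ) / 2 - 1 / (2 * d)) := by
  obtain ⟨K', hK', hpart⟩ := shatter_partial d C hd hC
  set e : ℝ := (1 : ℝ) / 2 - 1 / (2 * d) with he
  have he0 : 0 < e := by
    have : 1 / (2 * d) < 1 / 2 := by
      apply one_div_lt_one_div_of_lt <;> linarith
    rw [he]; linarith
  set r : ℝ := (9 / 10 : ℝ) ^ e with hr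
  have hr1 : r < 1 := Real.rpow_lt_one (by norm_num) (by norm_num) he0
  have hr0 : 0 < r := by positivity
  have hK0 : 0 < K' / (1 - r) := div_pos hK' (by linarith)
  refine ⟨K' / (1 - r), hK0, ?_⟩
  intro α _ N
  induction N using Nat.strong_induction_on with
  | _ N ih =>
  intro X P hXN hP hsh
  rcases Nat.eq_zero_or_pos X.card with h0 | hpos
  · have hX : X = ∅ := card_eq_zero.mp h0
    subst hX
    refine ⟨fun _ => 1, by simp, ?_⟩
    intro S hS
    have := subset_empty.mp (hP S hS)
    subst this
    simp only [sum_empty, abs_zero]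
    positivity
  · obtain ⟨χ, hχ, hχc, hχd⟩ := hpart α X P hpos hP hsh
    have hposR : (0:ℝ) < X.card := by exact_mod_cast hpos
    set X' := X.filter (fun x => χ x = 0) with hX'
    have hsum : X'.card + (X.filter (fun x => χ x ≠ 0)).card = X.card :=
      card_filter_add_card_filter_not _
    have hsumR : (X'.card : ℝ) + (X.filter (fun x => χ x ≠ 0)).card = X.card := by exact_mod_cast hsum
    have hX'c : (X'.card : ℝ) ≤ 9 / 10 * X.card := by linarith
    have hX'lt : X'.card < N := by
      have : (X'.card : ℝ) < X.card := by linarith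
      rw [← hXN]; exact_mod_cast this
    have hX'X : X' ⊆ X := filter_subset _ _
    obtain ⟨ψ, hψ, hψd⟩ := ih X'.card hX'lt X' (P.image (· ∩ X')) rfl (by
      intro S hS
      obtain ⟨S', _, rfl⟩ := mem_image.mp hS
      exact inter_subset_right) (by
      intro Y hY hY1
      have : (P.image (· ∩ X')).image (· ∩ Y) = P.image (· ∩ Y) := by
        rw [image_image]
        apply image_congr
        intro S _
        simp only [Function.comp]
        rw [inter_assoc, inter_eq_right.mpr hY]
      rw [this]
      exact hsh Y (hY.trans hX'X) hY1)
    refine ⟨fun x => if χ x = 0 then ψ x else χ x, ?_, ?_⟩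
    · intro x hx
      by_cases h : χ x = 0
      · simp only [h, if_true]
        exact hψ x (mem_filter.mpr ⟨hx, h⟩)
      · simp only [h, if_false]
        rcases hχ x with h' | h' | h'
        · exact Or.inl h'
        · exact absurd h' h
        · exact Or.inr h'
    · intro S hS
      have hdec : ∑ x ∈ S, ((if χ x = 0 then ψ x else χ x : ℤ) : ℝ) =
          ∑ x ∈ S, (χ x : ℝ) + ∑ x ∈ S ∩ X', (ψ x : ℝ) := by
        have h1 : S ∩ X' = S.filter (fun x => χ x = 0) := by
          ext x
          simp only [hX', mem_inter, mem_filter]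
          constructor
          · rintro ⟨h1, _, h3⟩; exact ⟨h1, h3⟩
          · rintro ⟨h1, h3⟩; exact ⟨h1, hP S hS h1, h3⟩
        rw [h1, sum_filter, ← sum_add_distrib]
        apply sum_congr rfl
        intro x _
        by_cases h : χ x = 0 <;> simp [h]
      rw [hdec]
      refine (abs_add_le _ _).trans ?_
      have b1 := hχd S hS
      have b2 := hψd _ (mem_image_of_mem (· ∩ X') hS)
      have b3 : (X'.card : ℝ) ^ e ≤ r * (X.card : ℝ) ^ e := by
        rw [hr, ← Real.mul_rpow (by norm_num) hposR.le]
        exact Real.rpow_le_rpow (Nat.cast_nonneg _) hX'c he0.le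
      have b4 : K' / (1 - r) * (X'.card : ℝ) ^ e ≤ K' / (1 - r) * (r * (X.card : ℝ) ^ e) := by gcongr
      have b5 : K' * (X.card : ℝ) ^ e + K' / (1 - r) * (r * (X.card : ℝ) ^ e) =
          K' / (1 - r) * (X.card : ℝ) ^ e := by
        have : 1 - r ≠ 0 := by linarith
        field_simp
        ring
      linarith


end Helpers

/-- Matoušek's discrepancy bound for bounded primal shatter dimension.
Let `d > 1` and `C > 0` be real constants. There exists a constant `K > 0` (depending only
on `d` and `C`) such that for every set system `(X, 𝒮)` on a finite ground set `X` with
`|X| = n ≥ 2` whose primal shatter function satisfies `π_𝒮(m) ≤ C·m^d` for all `1 ≤ m ≤ n`,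
there exists a coloring `χ : X → {-1, +1}` such that for every `S ∈ 𝒮`,
`|∑_{x ∈ S} χ(x)| ≤ K · n^(1/2 - 1/(2d))`. -/
theorem stmt0 (d C : ℝ) (hd : 1 < d) (hC : 0 < C) :
    ∃ K : ℝ, 0 < K ∧
      ∀ (α : Type) [DecidableEq α] (X : Finset α) (𝒮 : Finset (Finset α)),
        2 ≤ X.card →
        (∀ S ∈ 𝒮, S ⊆ X) →
        (∀ Y ⊆ X, 1 ≤ Y.card →
          ((𝒮.image (· ∩ Y)).card : ℝ) ≤ C * (Y.card : ℝ) ^ d) →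
        ∃ χ : α → ℤ,
          (∀ x ∈ X, χ x = 1 ∨ χ x = -1) ∧
          ∀ S ∈ 𝒮, |(∑ x ∈ S, (χ x : ℝ))| ≤
            K * (X.card : ℝ) ^ ((1 : ℝ) / 2 - 1 / (2 * d)) := by
  obtain ⟨K, hK, h⟩ := full_coloring d C hd hC
  exact ⟨K, hK, fun α _ X S _ hS hsh => h α X.card X S rfl hS hsh⟩
end

section
/- Let d ≥ 1 and 1 ≤ d₁ ≤ d be integers and let C > 0 and K > 0 be real constants. There exists a constant C' > 0 (depending only on d, C, and K) such that the following holds. Let (X, S) be a set system with |X| = n = 2^κ for an integer κ ≥ 1, satisfying the size-sensitive counting condition with parameters (C, d, d₁). Then for all integers i, j with 1 ≤ i, i − 1 ≤ j ≤ κ, and j ≥ 1, every (n/2^j)-separated subfamily P ⊆ S all of whose members F satisfy |F| ≤ K·n/2^{i−1} has cardinality |P| ≤ C' · j^d · 2^{jd} / 2^{(d−d₁)(i−1)}. -/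
open scoped symmDiff

lemma card_hit {α : Type} [DecidableEq α] (X F : Finset α) (m : ℕ) (hF : F ⊆ X) (t : Fin m) :
    ((Fintype.piFinset (fun _ : Fin m => X)).filter (fun x => x t ∈ F)).card * X.card
      = F.card * X.card ^ m := by
  have h1 : (Fintype.piFinset (fun _ : Fin m => X)).filter (fun x => x t ∈ F)
      = Fintype.piFinset (Function.update (fun _ : Fin m => X) t F) := by
    ext x
    simp only [Finset.mem_filter, Fintype.mem_piFinset]
    constructor
    · rintro ⟨h, h'⟩ s
      by_cases hs : s = t
      · subst hs; simpa using h'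
      · simpa [hs] using h s
    · intro h
      have ht : x t ∈ F := by simpa using h t
      refine ⟨fun s => ?_, ht⟩
      by_cases hs : s = t
      · subst hs; exact hF ht
      · simpa [hs] using h s
  rw [h1, Fintype.card_piFinset]
  have h2 : ∀ s, (Function.update (fun _ : Fin m => X) t F s).card
      = Function.update (fun _ : Fin m => X.card) t F.card s := by
    intro s
    by_cases hs : s = t
    · subst hs; simp
    · simp [hs]
  simp only [h2]
  rw [Finset.prod_update_of_mem (Finset.mem_univ t)]
  have hm : m = (m - 1) + 1 := by have := t.pos; omega
  simp only [Finset.prod_const]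
  rw [show (Finset.univ \ {t} : Finset (Fin m)).card = m - 1 by
    rw [Finset.card_sdiff_of_subset (by simp)]; simp]
  conv_rhs => rw [hm, pow_succ]
  ring

lemma sampling {α : Type} [DecidableEq α] (X : Finset α) (hX : X.Nonempty) (m : ℕ) (hm : 1 ≤ m)
    (P : Finset (Finset α)) (hP : P.Nonempty) (hPX : ∀ F ∈ P, F ⊆ X) (p q : ℝ) (hp : 0 < p)
    (hq : q ≤ 1)
    (hF : ∀ F ∈ P, (F.card : ℝ) ≤ p * X.card)
    (hsep : ∀ S₁ ∈ P, ∀ S₂ ∈ P, S₁ ≠ S₂ → q * X.card ≤ ((S₁ ∆ S₂).card : ℝ))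
    (hN : (P.card : ℝ) ^ 2 * (1 - q) ^ m ≤ 1 / 4) :
    ∃ Y ⊆ X, 1 ≤ Y.card ∧ Y.card ≤ m ∧
      (∀ S₁ ∈ P, ∀ S₂ ∈ P, S₁ ∩ Y = S₂ ∩ Y → S₁ = S₂) ∧
      (∑ F ∈ P, ((F ∩ Y).card : ℝ)) ≤ 2 * P.card * (m * p) := by
  classical
  set n : ℝ := (X.card : ℝ) with hn
  have hn0 : 0 < n := by simpa [hn] using hX.card_pos
  set N : ℝ := (P.card : ℝ) with hNN
  have hN0 : 0 < N := by simpa [hNN] using hP.card_pos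
  have hm0 : (0:ℝ) < m := by exact_mod_cast hm
  set Ω := Fintype.piFinset (fun _ : Fin m => X) with hΩ
  have hΩne : Ω.Nonempty := by
    obtain ⟨a, ha⟩ := hX
    exact ⟨fun _ => a, by simp [hΩ, ha]⟩
  have hΩc : (Ω.card : ℝ) = n ^ m := by simp [hΩ, hn]
  set T : (Fin m → α) → Finset α → ℝ := fun x F => ∑ t, if x t ∈ F then (1:ℝ) else 0 with hT
  set D := (P ×ˢ P).filter (fun r => r.1 ≠ r.2) with hD
  set U : (Fin m → α) → ℝ := fun x => ∑ r ∈ D, if (∀ t, x t ∉ r.1 ∆ r.2) then (1:ℝ) else 0 with hU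
  have hE1 : ∑ x ∈ Ω, ∑ F ∈ P, T x F ≤ N * (m * p) * n ^ m := by
    rw [Finset.sum_comm]
    have : ∀ F ∈ P, ∑ x ∈ Ω, T x F ≤ (m * p) * n ^ m := by
      intro F hFP
      simp only [hT]
      rw [Finset.sum_comm]
      have h1 : ∀ t ∈ (Finset.univ : Finset (Fin m)),
          (∑ x ∈ Ω, if x t ∈ F then (1:ℝ) else 0) ≤ p * n ^ m := by
        intro t _
        rw [Finset.sum_boole]
        have h2 := card_hit X F m (hPX F hFP) t
        have h3 : ((Ω.filter (fun x => x t ∈ F)).card : ℝ) * n = F.card * n ^ m := by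
          rw [hn]; exact_mod_cast h2
        have h4 := hF F hFP
        have h5 : (F.card : ℝ) * n ^ m ≤ p * n * n ^ m :=
          mul_le_mul_of_nonneg_right h4 (by positivity)
        refine le_of_mul_le_mul_right ?_ hn0
        linarith
      refine (Finset.sum_le_card_nsmul _ _ _ h1).trans ?_
      simp [mul_assoc]
    refine (Finset.sum_le_card_nsmul _ _ _ this).trans ?_
    simp [hNN, mul_assoc]
  have hE2 : ∑ x ∈ Ω, U x ≤ N ^ 2 * (1 - q) ^ m * n ^ m := by
    simp only [hU]
    rw [Finset.sum_comm]
    have : ∀ r ∈ D, (∑ x ∈ Ω, if (∀ t, x t ∉ r.1 ∆ r.2) then (1:ℝ) else 0)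
        ≤ (1 - q) ^ m * n ^ m := by
      intro r hr
      simp only [hD, Finset.mem_filter, Finset.mem_product] at hr
      rw [Finset.sum_boole]
      have h1 : Ω.filter (fun x => ∀ t, x t ∉ r.1 ∆ r.2)
          = Fintype.piFinset (fun _ : Fin m => X \ (r.1 ∆ r.2)) := by
        ext x
        simp only [hΩ, Finset.mem_filter, Fintype.mem_piFinset, Finset.mem_sdiff]
        exact ⟨fun h s => ⟨h.1 s, h.2 s⟩, fun h => ⟨fun s => (h s).1, fun s => (h s).2⟩⟩
      have hsub : r.1 ∆ r.2 ⊆ X := by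
        intro a ha
        rw [Finset.mem_symmDiff] at ha
        rcases ha with ha | ha
        · exact hPX _ hr.1.1 ha.1
        · exact hPX _ hr.1.2 ha.1
      rw [h1, Fintype.card_piFinset]
      simp only [Finset.prod_const, Finset.card_univ, Fintype.card_fin]
      push_cast
      rw [← mul_pow]
      refine pow_le_pow_left₀ (by positivity) ?_ m
      have h2 := Finset.card_sdiff_add_card_eq_card hsub
      have h3 : ((X \ (r.1 ∆ r.2)).card : ℝ) + (r.1 ∆ r.2).card = n := by
        rw [hn]; exact_mod_cast h2
      have := hsep _ hr.1.1 _ hr.1.2 hr.2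
      linarith
    refine (Finset.sum_le_card_nsmul _ _ _ this).trans ?_
    have hDc : (D.card : ℝ) ≤ N ^ 2 := by
      have : D.card ≤ P.card * P.card := by
        rw [← Finset.card_product]; exact Finset.card_filter_le _ _
      rw [hNN, sq]; exact_mod_cast this
    rw [nsmul_eq_mul, mul_assoc]
    have : 0 ≤ 1 - q := by linarith
    exact mul_le_mul_of_nonneg_right hDc (by positivity)
  have hμ : 0 < N * (m * p) := by positivity
  have hE : ∑ x ∈ Ω, (∑ F ∈ P, T x F + 4 * (N * (m * p)) * U x)
      ≤ ∑ x ∈ Ω, 2 * (N * (m * p)) := by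
    rw [Finset.sum_add_distrib, ← Finset.mul_sum, Finset.sum_const, nsmul_eq_mul, hΩc]
    have hnm : 0 < n ^ m := by positivity
    have h1 : ∑ x ∈ Ω, U x ≤ 1 / 4 * n ^ m :=
      hE2.trans (mul_le_mul_of_nonneg_right hN hnm.le)
    have h2 := mul_le_mul_of_nonneg_left h1 (by positivity : 0 ≤ 4 * (N * (m * p)))
    linarith
  obtain ⟨x, hx, hfx⟩ := Finset.exists_le_of_sum_le hΩne hE
  have hT0 : 0 ≤ ∑ F ∈ P, T x F := by
    simp only [hT]; positivity
  have hU0 : 0 ≤ U x := by simp only [hU]; positivity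
  have hxX : ∀ t, x t ∈ X := by simpa [hΩ] using hx
  refine ⟨Finset.univ.image x, ?_, ?_, ?_, ?_, ?_⟩
  · intro a ha
    obtain ⟨t, -, rfl⟩ := Finset.mem_image.1 ha
    exact hxX t
  · exact Finset.card_pos.2 ⟨x ⟨0, hm⟩, Finset.mem_image_of_mem _ (Finset.mem_univ _)⟩
  · simpa using Finset.card_image_le (s := Finset.univ) (f := x)
  · intro S₁ h₁ S₂ h₂ he
    by_contra hne
    have hmem : (S₁, S₂) ∈ D := by simp [hD, h₁, h₂, hne]
    have hall : ∀ t, x t ∉ S₁ ∆ S₂ := by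
      intro t ht
      have := Finset.ext_iff.1 he (x t)
      have hxi : x t ∈ Finset.univ.image x := Finset.mem_image_of_mem _ (Finset.mem_univ _)
      rw [Finset.mem_inter, Finset.mem_inter] at this
      rw [Finset.mem_symmDiff] at ht
      tauto
    have h1 : 1 ≤ U x := by
      have := Finset.single_le_sum (f := fun r : Finset α × Finset α =>
        if (∀ t, x t ∉ r.1 ∆ r.2) then (1:ℝ) else 0) (s := D)
        (fun r _ => by positivity) hmem
      rw [if_pos hall] at this
      exact this
    nlinarith
  · have h1 : ∑ F ∈ P, ((F ∩ Finset.univ.image x).card : ℝ) ≤ ∑ F ∈ P, T x F := by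
      refine Finset.sum_le_sum fun F _ => ?_
      simp only [hT]
      rw [Finset.sum_boole]
      have : F ∩ Finset.univ.image x ⊆ (Finset.univ.filter (fun t => x t ∈ F)).image x := by
        intro a ha
        obtain ⟨ha1, ha2⟩ := Finset.mem_inter.1 ha
        obtain ⟨t, -, rfl⟩ := Finset.mem_image.1 ha2
        exact Finset.mem_image_of_mem _ (by simpa using ha1)
      exact_mod_cast (Finset.card_le_card this).trans Finset.card_image_le
    have : 0 ≤ 4 * (N * (m * p)) * U x := by positivity
    linarith

lemma exists_c (D : ℝ) (e b : ℕ) : ∃ c : ℕ, 1 ≤ c ∧ b ≤ c ∧ D * (c : ℝ) ^ e ≤ Real.exp c := by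
  have h := (Real.tendsto_exp_div_pow_atTop e).comp (tendsto_natCast_atTop_atTop (R := ℝ))
  have h2 := (h.eventually_ge_atTop D).and
    ((Filter.eventually_ge_atTop 1).and (Filter.eventually_ge_atTop b))
  obtain ⟨c, h3, h4, h5⟩ := h2.exists
  refine ⟨c, h4, h5, ?_⟩
  have : (0:ℝ) < c := by exact_mod_cast h4
  simp only [Function.comp] at h3
  rwa [le_div_iff₀ (by positivity)] at h3

/-- The bound for a family of light, separated sets that is not too large. -/
lemma core (d d₁ : ℕ) (hd₁d : d₁ ≤ d) (C K : ℝ) (hC : 0 < C) (hK : 0 < K)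
    {α : Type} [DecidableEq α] (X : Finset α) (𝒮 : Finset (Finset α)) (κ : ℕ)
    (hX : X.card = 2 ^ κ) (hSX : ∀ S ∈ 𝒮, S ⊆ X)
    (hcount : ∀ Y ⊆ X, ∀ k : ℕ, 1 ≤ k → k ≤ Y.card →
          (((𝒮.image (· ∩ Y)).filter fun T => T.card ≤ k).card : ℝ) ≤
            C * (Y.card : ℝ) ^ d₁ * (k : ℝ) ^ (d - d₁))
    (l j c : ℕ) (hl : l ≤ j) (hj : 1 ≤ j) (hc : 1 ≤ c)
    (P : Finset (Finset α)) (hP : P ⊆ 𝒮)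
    (hsep : ∀ S₁ ∈ P, ∀ S₂ ∈ P, S₁ ≠ S₂ →
              (2 : ℝ) ^ κ / 2 ^ j < ((S₁ ∆ S₂).card : ℝ))
    (hF : ∀ F ∈ P, (F.card : ℝ) ≤ K * (2 : ℝ) ^ κ / 2 ^ l)
    (hN : (P.card : ℝ) ^ 2 * Real.exp (-(c * j)) ≤ 1 / 4) :
    (P.card : ℝ) ≤ 2 * C * (4 * K + 1) ^ d * (c : ℝ) ^ d * (j : ℝ) ^ d * 2 ^ (j * d)
      / 2 ^ ((d - d₁) * l) := by
  rcases P.eq_empty_or_nonempty with rfl | hPne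
  · simp; positivity
  set m : ℕ := c * j * 2 ^ j with hm
  have hm1 : 1 ≤ m := Nat.one_le_iff_ne_zero.2 (by positivity)
  have hXn : (X.card : ℝ) = 2 ^ κ := by rw [hX]; push_cast; rfl
  have hN' : (P.card : ℝ) ^ 2 * (1 - 1 / 2 ^ j) ^ m ≤ 1 / 4 := by
    refine le_trans (mul_le_mul_of_nonneg_left ?_ (by positivity)) hN
    have h1 : (1 - 1 / 2 ^ j : ℝ) ≤ Real.exp (-(1 / 2 ^ j)) := Real.one_sub_le_exp_neg _
    have h0 : (0:ℝ) ≤ 1 - 1 / 2 ^ j := by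
      rw [sub_nonneg, div_le_one (by positivity)]; exact one_le_pow₀ (by norm_num)
    refine (pow_le_pow_left₀ h0 h1 m).trans ?_
    rw [← Real.exp_nat_mul]
    apply le_of_eq
    congr 1
    rw [hm]; push_cast
    field_simp
  obtain ⟨Y, hYX, hY1, hYm, hinj, hsum⟩ := sampling X (Finset.card_pos.1 (by rw [hX]; positivity))
    m hm1 P hPne (fun F h => hSX F (hP h)) (K / 2 ^ l) (1 / 2 ^ j) (by positivity)
    (by rw [div_le_one (by positivity)]; exact one_le_pow₀ (by norm_num))
    (fun F h => by rw [hXn]; refine (hF F h).trans (le_of_eq (by ring)))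
    (fun S₁ h₁ S₂ h₂ h => by rw [hXn]; have := hsep S₁ h₁ S₂ h₂ h; exact le_trans (le_of_eq (by ring)) this.le)
    hN'
  set μ : ℝ := m * (K / 2 ^ l) with hμ
  have hμ0 : 0 < μ := by positivity
  set k : ℕ := min ⌈4 * μ⌉₊ Y.card with hk
  have hk1 : 1 ≤ k := le_min (Nat.one_le_iff_ne_zero.2 (Nat.ceil_pos.2 (by positivity)).ne') hY1
  have hcnt := hcount Y hYX k hk1 (min_le_right _ _)
  set L := P.filter (fun F => (F ∩ Y).card ≤ k) with hL
  have hLcard : L.card ≤ ((𝒮.image (· ∩ Y)).filter fun T => T.card ≤ k).card := by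
    apply Finset.card_le_card_of_injOn (fun F => F ∩ Y)
    · intro F hF
      have hF' := Finset.mem_filter.1 (Finset.mem_coe.1 hF)
      exact Finset.mem_coe.2 (Finset.mem_filter.2 ⟨Finset.mem_image_of_mem _ (hP hF'.1), hF'.2⟩)
    · intro F₁ h₁ F₂ h₂ he
      exact hinj _ (Finset.mem_filter.1 (Finset.mem_coe.1 h₁)).1 _
        (Finset.mem_filter.1 (Finset.mem_coe.1 h₂)).1 he
  have hheavy : ((P.filter (fun F => ¬ (F ∩ Y).card ≤ k)).card : ℝ) ≤ P.card / 2 := by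
    have h1 : ((P.filter (fun F => ¬ (F ∩ Y).card ≤ k)).card : ℝ) * (4 * μ)
        ≤ ∑ F ∈ P, ((F ∩ Y).card : ℝ) := by
      rw [← nsmul_eq_mul]
      refine (Finset.card_nsmul_le_sum _ (fun F => ((F ∩ Y).card : ℝ)) _ ?_).trans
        (Finset.sum_le_sum_of_subset_of_nonneg (Finset.filter_subset _ _)
          (fun _ _ _ => by positivity))
      intro F hF
      have h2 := (Finset.mem_filter.1 hF).2
      have h3 : (F ∩ Y).card ≤ Y.card := Finset.card_le_card Finset.inter_subset_right
      have h4 : ⌈4 * μ⌉₊ ≤ (F ∩ Y).card := by omega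
      exact (Nat.le_ceil _).trans (by exact_mod_cast h4)
    nlinarith
  have hsplit : (L.card : ℝ) + (P.filter (fun F => ¬ (F ∩ Y).card ≤ k)).card = P.card := by
    exact_mod_cast Finset.card_filter_add_card_filter_not (s := P) (fun F => (F ∩ Y).card ≤ k)
  have hLr : (L.card : ℝ) ≤ C * (Y.card : ℝ) ^ d₁ * (k : ℝ) ^ (d - d₁) :=
    le_trans (by exact_mod_cast hLcard) hcnt
  have hkr : (k : ℝ) ≤ (4 * K + 1) * (m / 2 ^ l) := by
    have h1 : (k : ℝ) ≤ ⌈4 * μ⌉₊ := by exact_mod_cast min_le_left _ _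
    have h2 := Nat.ceil_lt_add_one (a := 4 * μ) (by positivity)
    have h3 : (1:ℝ) ≤ m / 2 ^ l := by
      rw [le_div_iff₀ (by positivity), one_mul]
      have h4 : 2 ^ l ≤ m := by
        rw [hm]
        calc 2 ^ l ≤ 2 ^ j := Nat.pow_le_pow_right (by norm_num) hl
          _ = 1 * 2 ^ j := by ring
          _ ≤ _ := Nat.mul_le_mul_right _ (Nat.one_le_iff_ne_zero.2 (by positivity))
      exact_mod_cast h4
    have h5 : 4 * μ = 4 * K * (m / 2 ^ l) := by rw [hμ]; ring
    nlinarith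
  have hYr : (Y.card : ℝ) ≤ m := by exact_mod_cast hYm
  have hK1 : (4 * K + 1) ^ (d - d₁) ≤ (4 * K + 1) ^ d :=
    pow_le_pow_right₀ (by linarith) (Nat.sub_le _ _)
  have hmain : C * (Y.card : ℝ) ^ d₁ * (k : ℝ) ^ (d - d₁)
      ≤ C * (4 * K + 1) ^ d * (m : ℝ) ^ d / 2 ^ ((d - d₁) * l) := by
    calc C * (Y.card : ℝ) ^ d₁ * (k : ℝ) ^ (d - d₁)
        ≤ C * (m : ℝ) ^ d₁ * ((4 * K + 1) * (m / 2 ^ l)) ^ (d - d₁) := by gcongr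
      _ = C * (4 * K + 1) ^ (d - d₁) * ((m : ℝ) ^ d₁ * (m : ℝ) ^ (d - d₁)) / 2 ^ ((d - d₁) * l) := by
        rw [mul_pow, div_pow, ← pow_mul, mul_comm l]; ring
      _ = C * (4 * K + 1) ^ (d - d₁) * (m : ℝ) ^ d / 2 ^ ((d - d₁) * l) := by
        rw [← pow_add, Nat.add_sub_cancel' hd₁d]
      _ ≤ _ := by gcongr
  have hmr : (m : ℝ) ^ d = (c : ℝ) ^ d * (j : ℝ) ^ d * 2 ^ (j * d) := by
    rw [hm]; push_cast; rw [mul_pow, mul_pow, ← pow_mul]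
  have hfin : (P.card : ℝ) ≤ 2 * (C * (4 * K + 1) ^ d * (m : ℝ) ^ d / 2 ^ ((d - d₁) * l)) := by
    linarith
  rw [hmr] at hfin
  refine hfin.trans (le_of_eq (by ring))


/-- Sensitive Packing Lemma.
Let `d ≥ 1`, `1 ≤ d₁ ≤ d` be integers and `C, K > 0`. There exists `C' > 0` (depending
only on `d`, `C`, `K`) such that: for every set system `(X, 𝒮)` with `|X| = n = 2^κ`
(`κ ≥ 1`) satisfying the size-sensitive counting condition with parameters `(C, d, d₁)`,
for all integers `i, j` with `1 ≤ i`, `i − 1 ≤ j ≤ κ`, `j ≥ 1`, every `(n/2^j)`-separated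
subfamily `P ⊆ 𝒮` all of whose members `F` satisfy `|F| ≤ K·n/2^{i−1}` has
`|P| ≤ C' · j^d · 2^{jd} / 2^{(d−d₁)(i−1)}`. -/
theorem stmt9 (d d₁ : ℕ) (hd : 1 ≤ d) (hd₁ : 1 ≤ d₁) (hd₁d : d₁ ≤ d)
    (C K : ℝ) (hC : 0 < C) (hK : 0 < K) :
    ∃ C' : ℝ, 0 < C' ∧
      ∀ (α : Type) [DecidableEq α] (X : Finset α) (𝒮 : Finset (Finset α)) (κ : ℕ),
        1 ≤ κ → X.card = 2 ^ κ → (∀ S ∈ 𝒮, S ⊆ X) →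
        (∀ Y ⊆ X, ∀ k : ℕ, 1 ≤ k → k ≤ Y.card →
          (((𝒮.image (· ∩ Y)).filter fun T => T.card ≤ k).card : ℝ) ≤
            C * (Y.card : ℝ) ^ d₁ * (k : ℝ) ^ (d - d₁)) →
        ∀ i j : ℕ, 1 ≤ i → i - 1 ≤ j → 1 ≤ j → j ≤ κ →
          ∀ P : Finset (Finset α), P ⊆ 𝒮 →
            (∀ S₁ ∈ P, ∀ S₂ ∈ P, S₁ ≠ S₂ →
              (2 : ℝ) ^ κ / 2 ^ j < ((S₁ ∆ S₂).card : ℝ)) →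
            (∀ F ∈ P, (F.card : ℝ) ≤ K * (2 : ℝ) ^ κ / 2 ^ (i - 1)) →
            (P.card : ℝ) ≤ C' * (j : ℝ) ^ d * 2 ^ (j * d) / 2 ^ ((d - d₁) * (i - 1)) := by
  set A : ℝ := 2 * C * (4 * K + 1) ^ d with hA
  have hA0 : 0 < A := by positivity
  obtain ⟨c, hc1, hcd, hc⟩ := exists_c (4 * (A + 1) ^ 2 * Real.exp ((4 * d : ℕ) : ℝ)) (2 * d) (4 * d)
  have hc1r : (1:ℝ) ≤ c := by exact_mod_cast hc1
  refine ⟨A * (c : ℝ) ^ d, by positivity, ?_⟩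
  intro α _ X 𝒮 κ hκ hX hSX hcount i j hi hij hj hjκ P hP hsep hF
  set B : ℝ := A * (c : ℝ) ^ d * (j : ℝ) ^ d * 2 ^ (j * d) / 2 ^ ((d - d₁) * (i - 1)) with hB
  have hB0 : 0 ≤ B := by positivity
  by_contra hlt
  rw [not_le] at hlt
  have hfl : ⌊B⌋₊ + 1 ≤ P.card := by
    have := (Nat.floor_lt hB0).2 hlt
    omega
  obtain ⟨Q, hQP, hQc⟩ := Finset.exists_subset_card_eq hfl
  have hQr : (Q.card : ℝ) = ⌊B⌋₊ + 1 := by rw [hQc]; push_cast; rfl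
  have hQgt : B < Q.card := by rw [hQr]; exact Nat.lt_floor_add_one B
  have hjr : (1:ℝ) ≤ j := by exact_mod_cast hj
  have hj2 : (j : ℝ) ≤ 2 ^ j := by exact_mod_cast (Nat.lt_two_pow_self (n := j)).le
  have h2e : (2:ℝ) ^ j ≤ Real.exp j := by
    have h1 : (2:ℝ) ≤ Real.exp 1 := by have := Real.add_one_le_exp (1:ℝ); linarith
    calc (2:ℝ) ^ j ≤ Real.exp 1 ^ j := by gcongr
      _ = Real.exp j := by rw [← Real.exp_nat_mul]; simp
  have hje : (j : ℝ) ≤ Real.exp j := hj2.trans h2e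
  set E : ℝ := Real.exp j ^ (2 * d) with hE
  have hE1 : 1 ≤ E := one_le_pow₀ (Real.one_le_exp (by positivity))
  have hcd1 : (1:ℝ) ≤ (c:ℝ) ^ d := one_le_pow₀ hc1r
  have hQle : (Q.card : ℝ) ≤ (A + 1) * (c : ℝ) ^ d * E := by
    have h1 : (Q.card : ℝ) ≤ B + 1 := by rw [hQr]; linarith [Nat.floor_le hB0]
    have h2 : B ≤ A * (c : ℝ) ^ d * E := by
      calc B ≤ A * (c : ℝ) ^ d * (j : ℝ) ^ d * 2 ^ (j * d) :=
            div_le_self (by positivity) (one_le_pow₀ (by norm_num))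
        _ = A * (c : ℝ) ^ d * ((j : ℝ) ^ d * (2 ^ j) ^ d) := by rw [pow_mul]; ring
        _ ≤ A * (c : ℝ) ^ d * (Real.exp j ^ d * Real.exp j ^ d) := by gcongr
        _ = A * (c : ℝ) ^ d * E := by rw [hE, ← pow_add, two_mul]
    have h3 : 1 ≤ (c : ℝ) ^ d * E := one_le_mul_of_one_le_of_one_le hcd1 hE1
    nlinarith
  have hN : (Q.card : ℝ) ^ 2 * Real.exp (-(c * j)) ≤ 1 / 4 := by
    have h1 : (Q.card : ℝ) ^ 2 ≤ ((A + 1) * (c : ℝ) ^ d * E) ^ 2 :=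
      pow_le_pow_left₀ (by positivity) hQle 2
    have hE2 : E ^ 2 = Real.exp (4 * d * j) := by
      rw [hE, ← pow_mul, ← Real.exp_nat_mul]; congr 1; push_cast; ring
    have h2 : ((A + 1) * (c : ℝ) ^ d * E) ^ 2
        = (A + 1) ^ 2 * (c : ℝ) ^ (2 * d) * Real.exp (4 * d * j) := by
      rw [← hE2, mul_pow, mul_pow, ← pow_mul, mul_comm d]
    rw [h2] at h1
    have hcdr : (4:ℝ) * d ≤ c := by exact_mod_cast hcd
    have h3 : Real.exp (4 * d * j) * Real.exp (-(c * j)) ≤ Real.exp (4 * d) * Real.exp (-c) := by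
      rw [← Real.exp_add, ← Real.exp_add]
      apply Real.exp_le_exp.2
      nlinarith
    have h4 : 4 * (A + 1) ^ 2 * Real.exp (4 * d) * (c : ℝ) ^ (2 * d) * Real.exp (-c) ≤ 1 := by
      push_cast at hc
      calc _ ≤ Real.exp c * Real.exp (-c) := by gcongr
        _ = 1 := by rw [← Real.exp_add]; simp
    calc (Q.card : ℝ) ^ 2 * Real.exp (-(c * j))
        ≤ (A + 1) ^ 2 * (c : ℝ) ^ (2 * d) * Real.exp (4 * d * j) * Real.exp (-(c * j)) := by gcongr
      _ = (A + 1) ^ 2 * (c : ℝ) ^ (2 * d) * (Real.exp (4 * d * j) * Real.exp (-(c * j))) := by ring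
      _ ≤ (A + 1) ^ 2 * (c : ℝ) ^ (2 * d) * (Real.exp (4 * d) * Real.exp (-c)) := by gcongr
      _ ≤ 1 / 4 := by linarith
  have := core d d₁ hd₁d C K hC hK X 𝒮 κ hX hSX hcount (i - 1) j c hij hj hc1 Q (hQP.trans hP)
    (fun S₁ h₁ S₂ h₂ => hsep S₁ (hQP h₁) S₂ (hQP h₂)) (fun F h => hF F (hQP h)) hN
  exact absurd this (not_le.2 hQgt)
end
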